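/- arXiv:2102.02708 — 7 statements merged into one kernel-verified Lean document; each statement's English description precedes it below -/
import Mathlib

section
/- Let α ∈ (0, 1/2] and let f ∈ ℝ[z₁,…,zₙ] be a multiaffine polynomial with nonnegative coefficients, not identically zero, that is Γ_{2α}-stable. Then f is α-fractionally log-concave: the function (x₁,…,xₙ) ↦ log f(x₁^α,…,xₙ^α) is concave on the positive orthant ℝ_{>0}ⁿ. -/
open Finset

/-- `z` lies in the open sector `Γ_α` of aperture `απ` centered on the positive real axis. -/
def inSector (α : ℝ) (z : ℂ) : Prop := z ≠ 0 ∧ |z.arg| < α * Real.pi / 2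

open Filter Topology in
lemma slc_nonvanish (α : ℝ) (hα0 : 0 < α) (A B : ℂ → ℂ)
    (hA : Differentiable ℂ A) (hB : Differentiable ℂ B) (hB0 : B 0 ≠ 0)
    (U : Set ℂ) (hU : IsOpen U)
    (h : ∀ ζ ∈ U, ∀ z, inSector (2 * α) z → A ζ + z * B ζ ≠ 0) :
    ∀ ζ ∈ U, B ζ ≠ 0 := by
  intro ζ hζ hBz
  have hpos : ∀ r : ℝ, 0 < r → inSector (2 * α) (r : ℂ) := by
    intro r hr
    refine ⟨by exact_mod_cast hr.ne', ?_⟩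
    rw [Complex.arg_ofReal_of_nonneg hr.le]
    have := Real.pi_pos
    simp; positivity
  have hAz : A ζ ≠ 0 := by
    have := h ζ hζ _ (hpos 1 one_pos)
    simpa [hBz] using this
  have hAan : AnalyticAt ℂ A ζ := hA.analyticAt ζ
  have hBan : AnalyticAt ℂ B ζ := hB.analyticAt ζ
  have hq : AnalyticAt ℂ (fun x => B x / A x) ζ := hBan.div hAan hAz
  have hne : ∀ᶠ x in 𝓝 ζ, A x ≠ 0 := hA.continuous.continuousAt.eventually_ne hAz
  have hUe : ∀ᶠ x in 𝓝 ζ, x ∈ U := hU.mem_nhds hζ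
  rcases hq.eventually_constant_or_nhds_le_map_nhds with hc | hc
  · have hBe : B =ᶠ[𝓝 ζ] 0 := by
      filter_upwards [hc, hne] with x hx hx2
      rw [hBz, zero_div, div_eq_zero_iff] at hx
      simpa [hx2] using hx
    have hBU : AnalyticOnNhd ℂ B Set.univ := fun x _ => hB.analyticAt x
    have := hBU.eqOn_zero_of_preconnected_of_eventuallyEq_zero isPreconnected_univ
      (Set.mem_univ ζ) hBe (Set.mem_univ 0)
    exact hB0 this
  · have him : (fun x => B x / A x) '' {x | A x ≠ 0 ∧ x ∈ U} ∈ 𝓝 (0 : ℂ) := by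
      have : (fun x => B x / A x) '' {x | A x ≠ 0 ∧ x ∈ U} ∈ map (fun x => B x / A x) (𝓝 ζ) :=
        image_mem_map (hne.and hUe)
      have := hc this
      simpa [hBz] using this
    have ht : Tendsto (fun r : ℝ => -(r : ℂ)) (𝓝[>] 0) (𝓝 0) := by
      have : Continuous (fun r : ℝ => -(r : ℂ)) := by fun_prop
      have := this.tendsto 0
      simp only [Complex.ofReal_zero, neg_zero] at this
      exact this.mono_left nhdsWithin_le_nhds
    obtain ⟨r, hr1, hr2⟩ := ((ht.eventually him).and self_mem_nhdsWithin).exists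
    obtain ⟨x, ⟨hx1, hx2⟩, hx3⟩ := hr1
    have hr2 : 0 < r := hr2
    have hrc : (r : ℂ) ≠ 0 := by exact_mod_cast hr2.ne'
    apply h x hx2 _ (hpos r⁻¹ (by positivity))
    simp only at hx3
    rw [div_eq_iff hx1] at hx3
    rw [hx3]; push_cast; field_simp; ring

lemma slc_arg_neg {α : ℝ} {x : ℂ} (hx : x ≠ 0) (h : ¬ inSector (2 * α) (-x)) (hα : α ≤ 1/2) :
    |x.arg| ≤ Real.pi - α * Real.pi := by
  have h1 : α * Real.pi ≤ |(-x).arg| := by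
    by_contra hh
    push Not at hh
    exact h ⟨neg_ne_zero.mpr hx, by linarith⟩
  have hpi := Real.pi_pos
  rcases lt_trichotomy x.im 0 with hi | hi | hi
  · rw [Complex.arg_neg_eq_arg_add_pi_of_im_neg hi] at h1
    have h2 := Complex.neg_pi_lt_arg x
    have h3 := Complex.arg_neg_iff.2 hi
    rw [abs_of_nonneg (by linarith)] at h1
    rw [abs_of_neg h3]; linarith
  · by_cases hr : 0 ≤ x.re
    · have : x.arg = 0 := Complex.arg_eq_zero_iff.2 ⟨hr, hi⟩
      rw [this]; simp; nlinarith
    · have : (-x).arg = 0 := Complex.arg_eq_zero_iff.2 ⟨by simp; linarith, by simp [hi]⟩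
      rw [this] at h1
      simp at h1
      have : x.arg = Real.pi := Complex.arg_eq_pi_iff.2 ⟨by linarith, hi⟩
      rw [this, abs_of_pos hpi]; linarith
  · rw [Complex.arg_neg_eq_arg_sub_pi_of_im_pos hi] at h1
    have h2 := Complex.arg_le_pi x
    have h3 := Complex.arg_nonneg_iff.2 hi.le
    rw [abs_of_nonpos (by linarith)] at h1
    rw [abs_of_nonneg h3]; linarith

lemma slc_cayley {χ : ℂ} (h : 0 ≤ χ.re) : χ + 1 ≠ 0 ∧ ‖(χ - 1) / (χ + 1)‖ ≤ 1 := by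
  have h0 : χ + 1 ≠ 0 := by
    intro hh
    have := congrArg Complex.re hh
    simp at this; linarith
  refine ⟨h0, ?_⟩
  rw [norm_div, div_le_one (norm_pos_iff.2 h0)]
  apply le_of_sq_le_sq _ (norm_nonneg _)
  rw [Complex.sq_norm, Complex.sq_norm, Complex.normSq_apply, Complex.normSq_apply]
  simp
  nlinarith

lemma slc_mobius {u : ℂ} (h : ‖u‖ < 1) : 1 - u ≠ 0 ∧ 0 < ((1 + u) / (1 - u)).re := by
  have h0 : 1 - u ≠ 0 := by
    intro hh
    have : u = 1 := by linear_combination -hh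
    simp [this] at h
  refine ⟨h0, ?_⟩
  have h1 : 0 < Complex.normSq (1 - u) := Complex.normSq_pos.2 h0
  rw [Complex.div_re, ← add_div]
  apply div_pos _ h1
  have : ‖u‖ ^ 2 < 1 := by nlinarith [norm_nonneg u]
  rw [Complex.sq_norm, Complex.normSq_apply] at this
  simp
  nlinarith

lemma slc_schwarz (α : ℝ) (hα0 : 0 < α) (hα : α ≤ 1 / 2) (H G : ℂ → ℂ)
    (hH : Differentiable ℂ H) (hG : Differentiable ℂ G) (N P : ℝ) (hN : 0 < N) (hP : 0 < P)
    (hH0 : H 0 = N) (hG0 : G 0 = P) (H' G' : ℂ) (hH' : HasDerivAt H H' 0)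
    (hG' : HasDerivAt G G' 0)
    (h : ∀ ζ : ℂ, |ζ.im| < α * Real.pi → ∀ z, inSector (2 * α) z → H ζ + z * G ζ ≠ 0) :
    α * ‖P * H' - N * G'‖ ≤ (1 - α) * (P * N) := by
  have hpi := Real.pi_pos
  set U : Set ℂ := {ζ : ℂ | |ζ.im| < α * Real.pi} with hUdef
  have hU : IsOpen U := isOpen_lt (by fun_prop) (by fun_prop)
  have hNc : (N : ℂ) ≠ 0 := by exact_mod_cast hN.ne'
  have hPc : (P : ℂ) ≠ 0 := by exact_mod_cast hP.ne'
  have hGnz : ∀ ζ ∈ U, G ζ ≠ 0 :=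
    slc_nonvanish α hα0 H G hH hG (by rw [hG0]; exact hPc) U hU h
  have hHnz : ∀ ζ ∈ U, H ζ ≠ 0 := by
    refine slc_nonvanish α hα0 G H hG hH (by rw [hH0]; exact hNc) U hU ?_
    intro ζ hζ z hz h0
    refine h ζ hζ z⁻¹ ⟨inv_ne_zero hz.1, by rw [Complex.abs_arg_inv]; exact hz.2⟩ ?_
    have := hz.1
    field_simp
    linear_combination h0
  -- the normalised quotient
  set r : ℝ := P / N with hr
  have hrpos : 0 < r := div_pos hP hN
  set ψ : ℂ → ℂ := fun ζ => (r : ℂ) * (H ζ / G ζ) with hψ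
  have hψ0 : ψ 0 = 1 := by
    simp only [hψ, hH0, hG0, hr]; push_cast; field_simp
  have hψne : ∀ ζ ∈ U, ψ ζ ≠ 0 := fun ζ hζ =>
    mul_ne_zero (by exact_mod_cast hrpos.ne') (div_ne_zero (hHnz ζ hζ) (hGnz ζ hζ))
  have hψarg : ∀ ζ ∈ U, |(ψ ζ).arg| ≤ Real.pi - α * Real.pi := by
    intro ζ hζ
    simp only [hψ]
    rw [Complex.arg_real_mul _ hrpos]
    refine slc_arg_neg (div_ne_zero (hHnz ζ hζ) (hGnz ζ hζ)) ?_ hα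
    intro hs
    apply h ζ hζ _ hs
    have := hGnz ζ hζ
    field_simp; ring
  have hψslit : ∀ ζ ∈ U, ψ ζ ∈ Complex.slitPlane := by
    intro ζ hζ
    rw [Complex.mem_slitPlane_iff_arg]
    refine ⟨?_, hψne ζ hζ⟩
    intro hh
    have := hψarg ζ hζ
    rw [hh, abs_of_pos hpi] at this
    nlinarith
  have hψd : ∀ ζ ∈ U, DifferentiableAt ℂ ψ ζ := fun ζ hζ =>
    ((hH ζ).div (hG ζ) (hGnz ζ hζ)).const_mul _
  set ψ' : ℂ := (r : ℂ) * ((H' * P - N * G') / (P : ℂ) ^ 2) with hψ'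
  have hψder : HasDerivAt ψ ψ' 0 := by
    have := (hH'.div hG' (by rw [hG0]; exact hPc)).const_mul (r : ℂ)
    rw [hH0, hG0] at this
    exact this
  set k : ℝ := 1 / (2 - 2 * α) with hk
  have hkpos : 0 < k := by rw [hk]; apply one_div_pos.2; linarith
  have hk2 : k * (2 - 2 * α) = 1 := by rw [hk]; field_simp; rw [div_self]; linarith
  set χ : ℂ → ℂ := fun ζ => Complex.exp ((k : ℂ) * Complex.log (ψ ζ)) with hχ
  have hχ0 : χ 0 = 1 := by simp [hχ, hψ0]
  have hχd : ∀ ζ ∈ U, DifferentiableAt ℂ χ ζ := fun ζ hζ =>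
    (((hψd ζ hζ).clog (hψslit ζ hζ)).const_mul _).cexp
  have h0U : (0 : ℂ) ∈ U := by simp [hUdef]; positivity
  have hχder : HasDerivAt χ (k * ψ') 0 := by
    have := ((hψder.clog (hψslit 0 h0U)).const_mul (k : ℂ)).cexp
    simpa [hψ0] using this
  have hχre : ∀ ζ ∈ U, 0 ≤ (χ ζ).re := by
    intro ζ hζ
    simp only [hχ]
    rw [Complex.exp_re]
    apply mul_nonneg (Real.exp_pos _).le
    rw [Complex.im_ofReal_mul, Complex.log_im]
    apply Real.cos_nonneg_of_mem_Icc
    have h1 : |k * (ψ ζ).arg| ≤ Real.pi / 2 := by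
      rw [abs_mul, abs_of_pos hkpos]
      calc k * |(ψ ζ).arg| ≤ k * (Real.pi - α * Real.pi) :=
            mul_le_mul_of_nonneg_left (hψarg ζ hζ) hkpos.le
        _ = (k * (2 - 2 * α)) * (Real.pi / 2) := by ring
        _ = Real.pi / 2 := by rw [hk2, one_mul]
    have := abs_le.1 h1
    exact ⟨by linarith, by linarith⟩
  -- the disc
  set Z : ℂ → ℂ := fun u => ((2 * α : ℝ) : ℂ) * Complex.log ((1 + u) / (1 - u)) with hZ
  have hZ0 : Z 0 = 0 := by simp [hZ]
  have hZU : ∀ u ∈ Metric.ball (0 : ℂ) 1, Z u ∈ U := by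
    intro u hu
    rw [mem_ball_zero_iff] at hu
    have h1 := (slc_mobius hu).2
    have h2 := Complex.abs_arg_lt_pi_div_two_iff.2 (Or.inl h1)
    simp only [hUdef, Set.mem_ofPred_eq, hZ]
    rw [Complex.im_ofReal_mul, Complex.log_im, abs_mul, abs_of_pos (by linarith)]
    nlinarith
  have hZder : ∀ u ∈ Metric.ball (0 : ℂ) 1, DifferentiableAt ℂ Z u := by
    intro u hu
    rw [mem_ball_zero_iff] at hu
    have h1 := slc_mobius hu
    have h2 : DifferentiableAt ℂ (fun u : ℂ => (1 + u) / (1 - u)) u :=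
      (by fun_prop : DifferentiableAt ℂ (fun u : ℂ => 1 + u) u).div (by fun_prop) h1.1
    exact (h2.clog (Or.inl h1.2)).const_mul _
  have hZ' : HasDerivAt Z ((2 * α : ℝ) * 2 : ℂ) 0 := by
    have h2 : HasDerivAt (fun u : ℂ => (1 + u) / (1 - u)) 2 0 := by
      have := ((hasDerivAt_id' (0 : ℂ)).const_add 1).fun_div
        ((hasDerivAt_id' (0 : ℂ)).const_sub 1) (by simp)
      refine this.congr_deriv ?_
      norm_num
    have := (h2.clog (by simp)).const_mul ((2 * α : ℝ) : ℂ)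
    refine this.congr_deriv ?_
    simp
  set F : ℂ → ℂ := fun u => (χ (Z u) - 1) / (χ (Z u) + 1) with hF
  have hF0 : F 0 = 0 := by simp [hF, hZ0, hχ0]
  have hcomp : HasDerivAt (fun u => χ (Z u)) (k * ψ' * ((2 * α : ℝ) * 2)) 0 := by
    have := HasDerivAt.comp (0 : ℂ) (h₂ := χ) (h := Z) (by rw [hZ0]; exact hχder) hZ'
    exact this
  have hFder : HasDerivAt F (k * ψ' * ((2 * α : ℝ))) 0 := by
    have := (hcomp.sub_const 1).fun_div (hcomp.add_const 1) (by simp [hZ0, hχ0])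
    refine this.congr_deriv ?_
    simp only [hZ0, hχ0]; ring
  have hFd : DifferentiableOn ℂ F (Metric.ball 0 1) := by
    intro u hu
    apply DifferentiableAt.differentiableWithinAt
    have h1 : DifferentiableAt ℂ (fun u => χ (Z u)) u :=
      DifferentiableAt.comp (g := χ) (f := Z) u (hχd _ (hZU u hu)) (hZder u hu)
    exact (h1.sub_const 1).div (h1.add_const 1) (slc_cayley (hχre _ (hZU u hu))).1
  have hFm : Set.MapsTo F (Metric.ball 0 1) (Metric.closedBall (F 0) 1) := by
    intro u hu
    rw [hF0, mem_closedBall_zero_iff]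
    exact (slc_cayley (hχre _ (hZU u hu))).2
  have key := Complex.norm_deriv_le_one_of_mapsTo_ball hFd hFm one_pos
  rw [hFder.deriv, norm_mul, norm_mul, Complex.norm_real, Complex.norm_real,
    Real.norm_of_nonneg hkpos.le, Real.norm_of_nonneg (by linarith)] at key
  have hψn : ‖ψ'‖ = ‖P * H' - N * G'‖ / (P * N) := by
    rw [hψ', norm_mul, norm_div, norm_pow, Complex.norm_real, Complex.norm_real,
      Real.norm_of_nonneg hrpos.le, Real.norm_of_nonneg hP.le, hr, mul_comm H']
    field_simp
  rw [hψn] at key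
  set X := ‖(P : ℂ) * H' - N * G'‖ with hX
  have hPN : 0 < P * N := mul_pos hP hN
  have e : k * (X / (P * N)) * (2 * α) * ((2 - 2 * α) * (P * N)) = 2 * (α * X) := by
    calc _ = (k * (2 - 2 * α)) * (X / (P * N) * (P * N)) * (2 * α) := by ring
      _ = 2 * (α * X) := by rw [hk2, div_mul_cancel₀ _ hPN.ne']; ring
  have := mul_le_mul_of_nonneg_right key
    (show 0 ≤ (2 - 2 * α) * (P * N) from mul_nonneg (by linarith) hPN.le)
  rw [e] at this
  linarith

lemma slc_exp_sector (α : ℝ) (hα : α ≤ 1 / 2) (s : ℝ) (hs : |s| ≤ 1) (ζ : ℂ)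
    (hζ : |ζ.im| < α * Real.pi) : inSector (2 * α) (Complex.exp (ζ * s)) := by
  refine ⟨Complex.exp_ne_zero _, ?_⟩
  have hpi := Real.pi_pos
  have him : (ζ * s).im = ζ.im * s := Complex.im_mul_ofReal _ _
  have h1 : |ζ.im * s| < α * Real.pi := by
    rw [abs_mul]
    nlinarith [abs_nonneg ζ.im]
  have h2 := abs_lt.1 h1
  rw [← Complex.log_im, Complex.log_exp (by rw [him]; nlinarith) (by rw [him]; nlinarith), him]
  linarith

/-- indicator of membership -/
def slcE {n : ℕ} (S : Finset (Fin n)) (i : Fin n) : ℝ := if i ∈ S then 1 else 0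

lemma slc_row (n : ℕ) (α : ℝ) (hα0 : 0 < α) (hα : α ≤ 1 / 2)
    (w : Finset (Fin n) → ℝ) (hw : ∀ S, 0 ≤ w S)
    (hstable : ∀ z : Fin n → ℂ, (∀ i, inSector (2 * α) (z i)) →
      (∑ S : Finset (Fin n), (w S : ℂ) * ∏ i ∈ S, z i) ≠ 0)
    (i : Fin n) (s : Fin n → ℝ) (hsi : s i = 0) (hs : ∀ j, |s j| ≤ 1) :
    α * |(∑ S, w S * slcE S i) * (∑ S, w S * (1 - slcE S i) * ∑ j ∈ S, s j)
        - (∑ S, w S * (1 - slcE S i)) * (∑ S, w S * slcE S i * ∑ j ∈ S, s j)|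
      ≤ (1 - α) * ((∑ S, w S * slcE S i) * (∑ S, w S * (1 - slcE S i))) := by
  have ha : ∀ S, 0 ≤ w S * slcE S i := fun S =>
    mul_nonneg (hw S) (by unfold slcE; split_ifs <;> norm_num)
  have hb : ∀ S, 0 ≤ w S * (1 - slcE S i) := fun S =>
    mul_nonneg (hw S) (by unfold slcE; split_ifs <;> norm_num)
  have hdeg : ∀ a : Finset (Fin n) → ℝ, (∀ S, 0 ≤ a S) → ∑ S, a S = 0 →
      ∑ S, a S * ∑ j ∈ S, s j = 0 := by
    intro a ha h0
    rw [Finset.sum_eq_zero_iff_of_nonneg (fun S _ => ha S)] at h0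
    exact Finset.sum_eq_zero (fun S hS => by rw [h0 S hS, zero_mul])
  rcases (Finset.sum_nonneg (fun S (_ : S ∈ Finset.univ) => ha S)).eq_or_lt with hP | hP
  · rw [hdeg _ ha hP.symm, ← hP]; simp
  rcases (Finset.sum_nonneg (fun S (_ : S ∈ Finset.univ) => hb S)).eq_or_lt with hN | hN
  · rw [hdeg _ hb hN.symm, ← hN]; simp
  have hder : ∀ a : Finset (Fin n) → ℝ, ∀ ζ : ℂ,
      HasDerivAt (fun ζ : ℂ => ∑ S, (a S : ℂ) * Complex.exp (ζ * ((∑ j ∈ S, s j : ℝ) : ℂ)))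
        (∑ S, (a S : ℂ) * (Complex.exp (ζ * ((∑ j ∈ S, s j : ℝ) : ℂ)) *
          ((∑ j ∈ S, s j : ℝ) : ℂ))) ζ := by
    intro a ζ
    refine HasDerivAt.fun_sum fun S _ => ?_
    have := (((hasDerivAt_id' ζ).mul_const ((∑ j ∈ S, s j : ℝ) : ℂ)).cexp).const_mul (a S : ℂ)
    simpa using this
  have key := slc_schwarz α hα0 hα
    (fun ζ => ∑ S, ((w S * (1 - slcE S i) : ℝ) : ℂ) * Complex.exp (ζ * ((∑ j ∈ S, s j : ℝ) : ℂ)))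
    (fun ζ => ∑ S, ((w S * slcE S i : ℝ) : ℂ) * Complex.exp (ζ * ((∑ j ∈ S, s j : ℝ) : ℂ)))
    (fun ζ => (hder _ ζ).differentiableAt) (fun ζ => (hder _ ζ).differentiableAt)
    (∑ S, w S * (1 - slcE S i)) (∑ S, w S * slcE S i) hN hP (by simp) (by simp) _ _
    (hder _ 0) (hder _ 0) ?_
  · convert key using 2
    rw [← Real.norm_eq_abs, ← Complex.norm_real]
    simp
  · intro ζ hζ z hz
    have hz' := hstable (fun j => (if i = j then z else 1) * Complex.exp (ζ * s j)) ?_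
    · convert hz' using 1
      rw [Finset.mul_sum, ← Finset.sum_add_distrib]
      refine Finset.sum_congr rfl fun S _ => ?_
      rw [Finset.prod_mul_distrib, Finset.prod_ite_eq, ← Complex.exp_sum, ← Finset.mul_sum]
      unfold slcE
      split_ifs <;> push_cast <;> ring
    · intro j
      by_cases hij : i = j
      · subst hij
        simpa [hsi] using hz
      · simpa [hij] using slc_exp_sector α hα (s j) (hs j) ζ hζ

lemma slc_quad (n : ℕ) (α : ℝ) (hα0 : 0 < α) (hα : α ≤ 1 / 2)
    (w : Finset (Fin n) → ℝ) (hw : ∀ S, 0 ≤ w S)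
    (hstable : ∀ z : Fin n → ℂ, (∀ i, inSector (2 * α) (z i)) →
      (∑ S : Finset (Fin n), (w S : ℂ) * ∏ i ∈ S, z i) ≠ 0) (v : Fin n → ℝ) :
    α * ((∑ S, w S) * (∑ S, w S * (∑ i ∈ S, v i) ^ 2) - (∑ S, w S * ∑ i ∈ S, v i) ^ 2)
      ≤ (∑ S, w S) * ∑ S, w S * ∑ i ∈ S, v i ^ 2 := by
  set W := ∑ S, w S with hW
  set P : Fin n → ℝ := fun i => ∑ S, w S * slcE S i with hP
  set C : Fin n → Fin n → ℝ := fun i j => W * (∑ S, w S * slcE S i * slcE S j) - P i * P j with hC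
  have hsum : ∀ (S : Finset (Fin n)) (u : Fin n → ℝ), ∑ i ∈ S, u i = ∑ i, slcE S i * u i := by
    intro S u
    simp [slcE]
  have hPsum : ∀ (u : Fin n → ℝ), ∑ S, w S * ∑ i ∈ S, u i = ∑ i, P i * u i := by
    intro u
    have hu : ∀ S : Finset (Fin n), w S * ∑ j ∈ S, u j
        = ∑ j, w S * slcE S j * u j := fun S => by
      rw [hsum S u, Finset.mul_sum]
      exact Finset.sum_congr rfl fun j _ => by ring
    rw [Finset.sum_congr rfl fun S _ => hu S, Finset.sum_comm]
    exact Finset.sum_congr rfl fun j _ => by rw [Finset.sum_mul]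
  have hPsum2 : ∀ (i : Fin n) (u : Fin n → ℝ), ∑ S, w S * slcE S i * ∑ j ∈ S, u j
      = ∑ j, (∑ S, w S * slcE S i * slcE S j) * u j := by
    intro i u
    have hu : ∀ S : Finset (Fin n), w S * slcE S i * ∑ j ∈ S, u j
        = ∑ j, w S * slcE S i * slcE S j * u j := fun S => by
      rw [hsum S u, Finset.mul_sum]
      exact Finset.sum_congr rfl fun j _ => by ring
    rw [Finset.sum_congr rfl fun S _ => hu S, Finset.sum_comm]
    exact Finset.sum_congr rfl fun j _ => by rw [Finset.sum_mul]
  have hCrow : ∀ (i : Fin n) (u : Fin n → ℝ), ∑ j, C i j * u j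
      = W * (∑ S, w S * slcE S i * ∑ j ∈ S, u j) - P i * ∑ S, w S * ∑ j ∈ S, u j := by
    intro i u
    rw [hPsum, hPsum2, Finset.mul_sum, Finset.mul_sum, ← Finset.sum_sub_distrib]
    refine Finset.sum_congr rfl fun j _ => ?_
    simp only [hC]; ring
  have hN : ∀ i, ∑ S, w S * (1 - slcE S i) = W - P i := by
    intro i
    simp only [mul_sub, mul_one, Finset.sum_sub_distrib, hW, hP]
  have hN2 : ∀ i (u : Fin n → ℝ), ∑ S, w S * (1 - slcE S i) * ∑ j ∈ S, u j
      = (∑ S, w S * ∑ j ∈ S, u j) - ∑ S, w S * slcE S i * ∑ j ∈ S, u j := by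
    intro i u
    rw [← Finset.sum_sub_distrib]
    refine Finset.sum_congr rfl fun S _ => by ring
  have he2 : ∀ (S : Finset (Fin n)) i, slcE S i * slcE S i = slcE S i := by
    intro S i; unfold slcE; split_ifs <;> simp
  have hCii : ∀ i, C i i = P i * (W - P i) := by
    intro i
    simp only [hC, mul_assoc, he2]
    simp only [hP]; ring
  have hP0 : ∀ i, 0 ≤ P i := fun i => Finset.sum_nonneg fun S _ =>
    mul_nonneg (hw S) (by unfold slcE; split_ifs <;> norm_num)
  have hPN : ∀ i, 0 ≤ W - P i := fun i => by
    rw [← hN]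
    exact Finset.sum_nonneg fun S _ =>
      mul_nonneg (hw S) (by unfold slcE; split_ifs <;> norm_num)
  have hrow : ∀ i, α * ∑ j, |C i j| ≤ P i * W := by
    intro i
    set s : Fin n → ℝ := fun j => if j = i then 0 else (if 0 ≤ C i j then 1 else -1) with hs
    have h1 := slc_row n α hα0 hα w hw hstable i s (by simp [hs]) (by
      intro j; simp only [hs]; split_ifs <;> simp)
    rw [hN, hN2] at h1
    have h2 : ∑ j, |C i j| = C i i + ∑ j, C i j * s j := by
      have : C i i = ∑ j, if j = i then C i j else 0 := by simp
      rw [this, ← Finset.sum_add_distrib]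
      refine Finset.sum_congr rfl fun j _ => ?_
      simp only [hs]
      split_ifs with hji h0
      · subst hji
        rw [abs_of_nonneg (by rw [hCii]; exact mul_nonneg (hP0 _) (hPN _))]; ring
      · rw [abs_of_nonneg h0]; ring
      · rw [abs_of_neg (by linarith)]; ring
    rw [h2, hCii, hCrow]
    have h3 := neg_abs_le ((P i) * ((∑ S, w S * ∑ j ∈ S, s j) - ∑ S, w S * slcE S i * ∑ j ∈ S, s j)
        - (W - P i) * (∑ S, w S * slcE S i * ∑ j ∈ S, s j))
    have h4 := mul_le_mul_of_nonneg_left h3 hα0.le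
    have h5 : 0 ≤ P i * P i := mul_self_nonneg _
    change α * |P i * _ - _| ≤ (1 - α) * (P i * (W - P i)) at h1
    linarith
  have hCsymm : ∀ i j, C i j = C j i := by
    intro i j
    simp only [hC]
    rw [mul_comm (P i)]
    congr 2
    exact Finset.sum_congr rfl fun S _ => by ring
  have hquad : W * (∑ S, w S * (∑ i ∈ S, v i) ^ 2) - (∑ S, w S * ∑ i ∈ S, v i) ^ 2
      = ∑ i, ∑ j, C i j * v j * v i := by
    have : ∀ i, ∑ j, C i j * v j * v i = (∑ j, C i j * v j) * v i := fun i => by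
      rw [Finset.sum_mul]
    simp only [this, hCrow, sub_mul, Finset.sum_sub_distrib]
    congr 1
    · have hS : ∀ S : Finset (Fin n), w S * (∑ i ∈ S, v i) ^ 2
          = ∑ i, w S * slcE S i * (∑ j ∈ S, v j) * v i := fun S => by
        have : ∀ i, w S * slcE S i * (∑ j ∈ S, v j) * v i
            = (w S * ∑ j ∈ S, v j) * (slcE S i * v i) := fun i => by ring
        rw [Finset.sum_congr rfl fun i _ => this i, ← Finset.mul_sum, ← hsum S v]
        ring
      rw [Finset.sum_congr rfl fun S _ => hS S, Finset.sum_comm, Finset.mul_sum]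
      refine Finset.sum_congr rfl fun i _ => ?_
      rw [mul_assoc W]
      congr 1
      rw [Finset.sum_mul]
    · rw [pow_two]
      nth_rewrite 1 [hPsum]
      rw [Finset.sum_mul]
      refine Finset.sum_congr rfl fun i _ => by ring
  rw [hquad, hPsum]
  have hb : ∑ i, ∑ j, C i j * v j * v i ≤ ∑ i, (∑ j, |C i j|) * v i ^ 2 := by
    have h1 : ∑ i, ∑ j, C i j * v j * v i
        ≤ ∑ i, ∑ j, (|C i j| * v i ^ 2 / 2 + |C i j| * v j ^ 2 / 2) := by
      refine Finset.sum_le_sum fun i _ => Finset.sum_le_sum fun j _ => ?_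
      have h2 := le_abs_self (C i j)
      have h3 := neg_abs_le (C i j)
      nlinarith [mul_nonneg (sub_nonneg.2 h2) (sq_nonneg (v i + v j)),
        mul_nonneg (sub_nonneg.2 h3) (sq_nonneg (v i - v j))]
    refine h1.trans_eq ?_
    simp only [Finset.sum_add_distrib]
    have h2 : ∑ i, ∑ j, |C i j| * v j ^ 2 / 2 = ∑ i, ∑ j, |C i j| * v i ^ 2 / 2 := by
      rw [Finset.sum_comm]
      refine Finset.sum_congr rfl fun i _ => Finset.sum_congr rfl fun j _ => ?_
      rw [hCsymm]
    rw [h2, ← Finset.sum_add_distrib]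
    refine Finset.sum_congr rfl fun i _ => ?_
    rw [← Finset.sum_add_distrib, Finset.sum_mul]
    exact Finset.sum_congr rfl fun j _ => by ring
  calc α * ∑ i, ∑ j, C i j * v j * v i ≤ α * ∑ i, (∑ j, |C i j|) * v i ^ 2 :=
        mul_le_mul_of_nonneg_left hb hα0.le
    _ = ∑ i, (α * ∑ j, |C i j|) * v i ^ 2 := by
        rw [Finset.mul_sum]; exact Finset.sum_congr rfl fun i _ => by ring
    _ ≤ ∑ i, (P i * W) * v i ^ 2 :=
        Finset.sum_le_sum fun i _ => mul_le_mul_of_nonneg_right (hrow i) (sq_nonneg _)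
    _ = W * ∑ i, P i * v i ^ 2 := by
        rw [Finset.mul_sum]; exact Finset.sum_congr rfl fun i _ => by ring

/-- A `Γ_{2α}`-sector-stable multiaffine polynomial `f = Σ_S c_S z^S` with nonnegative
coefficients, not identically zero, is `α`-fractionally log-concave:
`x ↦ log f(x₁^α, …, xₙ^α)` is concave on the positive orthant. -/
theorem fractionally_log_concave_of_sector_stable (n : ℕ) (α : ℝ)
    (hα0 : 0 < α) (hα : α ≤ 1 / 2)
    (c : Finset (Fin n) → ℝ) (hc : ∀ S, 0 ≤ c S) (hne : ∃ S, c S ≠ 0)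
    (hstable : ∀ z : Fin n → ℂ, (∀ i, inSector (2 * α) (z i)) →
      (∑ S : Finset (Fin n), (c S : ℂ) * ∏ i ∈ S, z i) ≠ 0) :
    ConcaveOn ℝ {x : Fin n → ℝ | ∀ i, 0 < x i}
      (fun x => Real.log (∑ S : Finset (Fin n), c S * ∏ i ∈ S, x i ^ α)) := by
  have hconv : Convex ℝ {x : Fin n → ℝ | ∀ i, 0 < x i} := by
    intro x hx y hy a b ha hb hab i
    have h1 := hx i
    have h2 := hy i
    simp only [Pi.add_apply, Pi.smul_apply, smul_eq_mul]
    rcases ha.eq_or_lt with h | h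
    · have : b = 1 := by linarith
      rw [← h, this]; linarith
    · have := mul_pos h h1
      have := mul_nonneg hb h2.le
      linarith
  have hWpos : ∀ x : Fin n → ℝ, (∀ i, 0 < x i) → 0 < ∑ S, c S * ∏ i ∈ S, x i ^ α := by
    intro x hx
    have hp : ∀ S : Finset (Fin n), 0 < ∏ i ∈ S, x i ^ α := fun S =>
      Finset.prod_pos fun i _ => Real.rpow_pos_of_pos (hx i) _
    obtain ⟨S, hS⟩ := hne
    exact Finset.sum_pos' (fun S _ => mul_nonneg (hc S) (hp S).le)
      ⟨S, Finset.mem_univ _, mul_pos (lt_of_le_of_ne (hc S) hS.symm) (hp S)⟩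
  refine ⟨hconv, ?_⟩
  intro x hx y hy a b ha hb hab
  -- restriction to the segment
  set X : ℝ → Fin n → ℝ := fun t i => x i + t * (y i - x i) with hX
  have hXpos : ∀ t ∈ Set.Icc (0 : ℝ) 1, ∀ i, 0 < X t i := by
    intro t ht
    have := hconv hx hy (sub_nonneg.2 ht.2) ht.1 (by ring)
    intro i
    have := this i
    simp only [Pi.add_apply, Pi.smul_apply, smul_eq_mul] at this
    simp only [hX]; linarith
  set T : Finset (Fin n) → ℝ → ℝ := fun S t => c S * ∏ i ∈ S, X t i ^ α with hT
  set V : ℝ → Fin n → ℝ := fun t i => (y i - x i) / X t i with hV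
  have hVd : ∀ t ∈ Set.Icc (0 : ℝ) 1, ∀ i, HasDerivAt (fun t => V t i) (-(V t i) ^ 2) t := by
    intro t ht i
    have h0 := (hXpos t ht i).ne'
    have h1 : HasDerivAt (fun t => X t i) (y i - x i) t := by
      refine (((hasDerivAt_id' t).mul_const (y i - x i)).const_add (x i)).congr_deriv ?_
      simp
    have := (hasDerivAt_const t (y i - x i)).fun_div h1 h0
    refine this.congr_deriv ?_
    simp only [hV]; field_simp; ring
  have hTd : ∀ t ∈ Set.Icc (0 : ℝ) 1, ∀ S,
      HasDerivAt (T S) (T S t * (α * ∑ i ∈ S, V t i)) t := by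
    intro t ht S
    have h1 : ∀ i, HasDerivAt (fun t => X t i ^ α) (X t i ^ α * (α * V t i)) t := by
      intro i
      have h0 := (hXpos t ht i)
      have h1 : HasDerivAt (fun t => X t i) (y i - x i) t := by
        refine (((hasDerivAt_id' t).mul_const (y i - x i)).const_add (x i)).congr_deriv ?_
        simp
      refine (h1.rpow_const (p := α) (Or.inl h0.ne')).congr_deriv ?_
      rw [Real.rpow_sub_one h0.ne']
      simp only [hV]; field_simp
    have h2 := (HasDerivAt.fun_finsetProd (u := S) (fun i _ => h1 i)).const_mul (c S)
    refine h2.congr_deriv ?_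
    simp only [hT, Finset.mul_sum, smul_eq_mul]
    refine Finset.sum_congr rfl fun i hi => ?_
    rw [← Finset.mul_prod_erase S _ hi]
    ring
  set F : ℝ → ℝ := fun t => ∑ S, T S t with hF
  set F1 : ℝ → ℝ := fun t => ∑ S, T S t * (α * ∑ i ∈ S, V t i) with hF1
  set F2 : ℝ → ℝ := fun t => ∑ S, (T S t * (α * ∑ i ∈ S, V t i) * (α * ∑ i ∈ S, V t i)
    + T S t * (α * ∑ i ∈ S, -(V t i) ^ 2)) with hF2
  have hFpos : ∀ t ∈ Set.Icc (0 : ℝ) 1, 0 < F t := fun t ht => hWpos _ (hXpos t ht)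
  have hFd : ∀ t ∈ Set.Icc (0 : ℝ) 1, HasDerivAt F (F1 t) t := fun t ht =>
    HasDerivAt.fun_sum fun S _ => hTd t ht S
  have hF1d : ∀ t ∈ Set.Icc (0 : ℝ) 1, HasDerivAt F1 (F2 t) t := fun t ht =>
    HasDerivAt.fun_sum fun S _ => (hTd t ht S).mul
      ((HasDerivAt.fun_sum fun i _ => hVd t ht i).const_mul α)
  have hconc : ConcaveOn ℝ (Set.Icc (0 : ℝ) 1) (fun t => Real.log (F t)) := by
    have hi : ∀ t ∈ interior (Set.Icc (0 : ℝ) 1), t ∈ Set.Icc (0 : ℝ) 1 :=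
      fun t ht => interior_subset ht
    refine concaveOn_of_hasDerivWithinAt2_nonpos (convex_Icc 0 1)
      (f' := fun t => F1 t / F t) (f'' := fun t => (F2 t * F t - F1 t * F1 t) / F t ^ 2) ?_ ?_ ?_ ?_
    · intro t ht
      exact ((hFd t ht).log (hFpos t ht).ne').continuousAt.continuousWithinAt
    · intro t ht
      exact ((hFd t (hi t ht)).log (hFpos t (hi t ht)).ne').hasDerivWithinAt
    · intro t ht
      exact ((hF1d t (hi t ht)).fun_div (hFd t (hi t ht)) (hFpos t (hi t ht)).ne').hasDerivWithinAt
    · intro t ht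
      have ht := hi t ht
      have hXp := hXpos t ht
      have hrp : ∀ i, 0 < X t i ^ α := fun i => Real.rpow_pos_of_pos (hXp i) _
      apply div_nonpos_of_nonpos_of_nonneg _ (sq_nonneg _)
      have key := slc_quad n α hα0 hα (fun S => T S t)
        (fun S => mul_nonneg (hc S) (Finset.prod_pos fun i _ => hrp i).le) (by
          intro z hz
          have := hstable (fun i => ((X t i ^ α : ℝ) : ℂ) * z i) (by
            intro i
            refine ⟨mul_ne_zero (by exact_mod_cast (hrp i).ne') (hz i).1, ?_⟩
            rw [Complex.arg_real_mul _ (hrp i)]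
            exact (hz i).2)
          convert this using 1
          refine Finset.sum_congr rfl fun S _ => ?_
          rw [Finset.prod_mul_distrib]
          simp only [hT]
          push_cast
          ring) (V t)
      have e1 : F1 t = α * ∑ S, T S t * ∑ i ∈ S, V t i := by
        simp only [hF1]
        rw [Finset.mul_sum]
        exact Finset.sum_congr rfl fun S _ => by ring
      have e2 : F2 t = α * (α * ∑ S, T S t * (∑ i ∈ S, V t i) ^ 2
          - ∑ S, T S t * ∑ i ∈ S, V t i ^ 2) := by
        simp only [hF2]
        rw [Finset.mul_sum, ← Finset.sum_sub_distrib, Finset.mul_sum]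
        refine Finset.sum_congr rfl fun S _ => ?_
        rw [Finset.sum_neg_distrib]; ring
      rw [e1, e2]
      change α * (F t * _ - _) ≤ F t * _ at key
      have := mul_le_mul_of_nonneg_left key hα0.le
      linarith
  have h := hconc.2 (Set.left_mem_Icc.2 zero_le_one) (Set.right_mem_Icc.2 zero_le_one) ha hb hab
  have hz0 : X 0 = x := by funext i; simp [hX]
  have hz1 : X 1 = y := by funext i; simp [hX]
  have hzb : X (a • 0 + b • 1) = a • x + b • y := by
    funext i
    simp only [hX, Pi.add_apply, Pi.smul_apply, smul_eq_mul]
    have : a = 1 - b := by linarith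
    rw [this]; ring
  simp only [hF, hT, hz0, hz1, hzb] at h
  exact h
end

section
/- Let α ∈ (0,1] and let f(z₁,…,zₙ) = Σ_{S ⊆ [n]} c_S Π_{i∈S} z_i be a multiaffine polynomial with nonnegative coefficients, not identically zero, that is Γ_α-stable. Then the homogenization f^hom(z₁,…,zₙ,w₁,…,wₙ) = Σ_{S ⊆ [n]} c_S · Π_{i∈S} z_i · Π_{i∉S} w_i is (α/2)-fractionally log-concave: the function (x,w) ↦ log f^hom(x₁^{α/2},…,xₙ^{α/2},w₁^{α/2},…,wₙ^{α/2}) is concave on ℝ_{>0}^{2n}. -/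
open Finset

noncomputable def expSum {ι : Type*} (c : Finset ι → ℝ) (T : Finset ι) (s : ι → ℂ) : ℂ :=
  ∑ S ∈ T.powerset, (c S : ℂ) * Complex.exp (∑ i ∈ S, s i)

def expStable {ι : Type*} (δ : ℝ) (c : Finset ι → ℝ) (T : Finset ι) : Prop :=
  ∀ s : ι → ℂ, (∀ i, |(s i).im| < δ) → expSum c T s ≠ 0

theorem expSum_insert {ι : Type*} [DecidableEq ι] (c : Finset ι → ℝ) (T : Finset ι) (a : ι)
    (ha : a ∉ T) (s : ι → ℂ) :
    expSum c (insert a T) s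
      = expSum c T s + Complex.exp (s a) * expSum (fun S => c (insert a S)) T s := by
  unfold expSum
  rw [Finset.sum_powerset_insert ha, Finset.mul_sum]
  congr 1
  refine Finset.sum_congr rfl fun S hS => ?_
  have : a ∉ S := fun h => ha (Finset.mem_powerset.1 hS h)
  rw [Finset.sum_insert this, Complex.exp_add]
  ring

theorem expSum_update {ι : Type*} [DecidableEq ι] (c : Finset ι → ℝ) (T : Finset ι) (a : ι)
    (ha : a ∉ T) (s : ι → ℂ) (v : ℂ) :
    expSum c T (Function.update s a v) = expSum c T s := by
  unfold expSum
  refine Finset.sum_congr rfl fun S hS => ?_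
  congr 2
  refine Finset.sum_congr rfl fun i hi => ?_
  rw [Function.update_of_ne]
  rintro rfl
  exact ha (Finset.mem_powerset.1 hS hi)

theorem expSum_zero_ne {ι : Type*} (c : Finset ι → ℝ) (T : Finset ι) (hc : ∀ S, 0 ≤ c S)
    (hne : ∃ S, S ⊆ T ∧ c S ≠ 0) : expSum c T (fun _ => 0) ≠ 0 := by
  obtain ⟨S, hS, h⟩ := hne
  have : expSum c T (fun _ => 0) = ((∑ S ∈ T.powerset, c S : ℝ) : ℂ) := by
    simp [expSum]
  rw [this]
  have : 0 < ∑ S ∈ T.powerset, c S :=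
    Finset.sum_pos' (fun S _ => hc S) ⟨S, Finset.mem_powerset.2 hS, lt_of_le_of_ne (hc S) h.symm⟩
  exact_mod_cast this.ne'

theorem expSum_differentiable {ι : Type*} (c : Finset ι → ℝ) (T : Finset ι) (s : ι → ℂ) :
    Differentiable ℂ (fun τ : ℂ => expSum c T (fun i => τ * s i)) := by
  unfold expSum
  fun_prop

open Filter Topology in
theorem perturb_zero (A B : ℂ → ℂ) (hA : Differentiable ℂ A) (hB : Differentiable ℂ B)
    (hA1 : A 1 = 0) (hB1 : B 1 ≠ 0) (hA0 : A 0 ≠ 0) (N : ℂ → Prop) (hN : ∀ᶠ τ in 𝓝 (1 : ℂ), N τ) :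
    ∃ τ, N τ ∧ ∃ r : ℝ, 0 < r ∧ A τ + r * B τ = 0 := by
  have hBne : ∀ᶠ τ in 𝓝 (1 : ℂ), B τ ≠ 0 := hB.continuous.continuousAt.eventually_ne hB1
  have hAa : AnalyticAt ℂ A 1 := hA.analyticAt 1
  have hBa : AnalyticAt ℂ B 1 := hB.analyticAt 1
  have hg : AnalyticAt ℂ (fun τ => -(A τ / B τ)) 1 := (hAa.div hBa hB1).neg
  rcases hg.eventually_constant_or_nhds_le_map_nhds with h | h
  · exfalso
    have h0 : A =ᶠ[𝓝 1] 0 := by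
      filter_upwards [h, hBne] with τ h1 h2
      simpa [hA1, h2] using h1
    have hAU : AnalyticOnNhd ℂ A Set.univ := fun x _ => hA.analyticAt x
    exact hA0 (hAU.eqOn_zero_of_preconnected_of_eventuallyEq_zero isPreconnected_univ
      (Set.mem_univ 1) h0 (Set.mem_univ 0))
  · have h1 : ∀ᶠ τ in 𝓝 (1 : ℂ), N τ ∧ B τ ≠ 0 := hN.and hBne
    have h2 : (fun τ => -(A τ / B τ)) '' {τ | N τ ∧ B τ ≠ 0} ∈ 𝓝 (0 : ℂ) := by
      have := h (image_mem_map h1)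
      simpa [hA1] using this
    have h3 : Tendsto (fun r : ℝ => (r : ℂ)) (𝓝[>] 0) (𝓝 (0 : ℂ)) := by
      have : ContinuousAt (fun r : ℝ => (r : ℂ)) 0 := Complex.continuous_ofReal.continuousAt
      have h' := this.tendsto
      simp only [Complex.ofReal_zero] at h'
      exact h'.mono_left nhdsWithin_le_nhds
    obtain ⟨r, ⟨τ, ⟨hτ, hb⟩, hr⟩, hr0⟩ := ((h3.eventually h2).and self_mem_nhdsWithin).exists
    refine ⟨τ, hτ, r, hr0, ?_⟩
    simp only at hr
    rw [← hr]
    field_simp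
    ring

open Filter Topology in
theorem strip_eventually {ι : Type*} [Finite ι] (δ : ℝ) (s : ι → ℂ) (hs : ∀ i, |(s i).im| < δ) :
    ∀ᶠ τ in 𝓝 (1 : ℂ), ∀ i, |(τ * s i).im| < δ := by
  rw [eventually_all]
  intro i
  have : ContinuousAt (fun τ : ℂ => |(τ * s i).im|) 1 := by fun_prop
  exact this.eventually_lt_const (by simpa using hs i)

theorem expStable_left {ι : Type*} [DecidableEq ι] [Finite ι] (δ : ℝ) (hδ : 0 < δ)
    (c : Finset ι → ℝ) (T : Finset ι) (a : ι)
    (ha : a ∉ T) (hc : ∀ S, 0 ≤ c S) (hne : ∃ S, S ⊆ T ∧ c S ≠ 0)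
    (h : expStable δ c (insert a T)) : expStable δ c T := by
  intro s hs h0
  have hB : expSum (fun S => c (insert a S)) T s ≠ 0 := by
    intro hB
    apply h s hs
    rw [expSum_insert c T a ha, h0, hB]; simp
  obtain ⟨τ, hτ, r, hr, h1⟩ := perturb_zero _ _ (expSum_differentiable c T s)
    (expSum_differentiable (fun S => c (insert a S)) T s) (by simpa using h0) (by simpa using hB)
    (by simpa using expSum_zero_ne c T hc hne) _ (strip_eventually δ s hs)
  refine h (Function.update (fun i => τ * s i) a (Real.log r : ℝ)) ?_ ?_
  · intro i
    by_cases hi : i = a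
    · subst hi; simpa using hδ
    · simpa [hi] using hτ i
  · rw [expSum_insert c T a ha, expSum_update _ _ _ ha, expSum_update _ _ _ ha,
      Function.update_self, ← Complex.ofReal_exp, Real.exp_log hr]
    exact h1

theorem expStable_right {ι : Type*} [DecidableEq ι] [Finite ι] (δ : ℝ) (hδ : 0 < δ)
    (c : Finset ι → ℝ) (T : Finset ι) (a : ι)
    (ha : a ∉ T) (hc : ∀ S, 0 ≤ c S) (hne : ∃ S, S ⊆ T ∧ c (insert a S) ≠ 0)
    (h : expStable δ c (insert a T)) : expStable δ (fun S => c (insert a S)) T := by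
  intro s hs h0
  have hB : expSum c T s ≠ 0 := by
    intro hB
    apply h s hs
    rw [expSum_insert c T a ha, h0, hB]; simp
  obtain ⟨τ, hτ, r, hr, h1⟩ := perturb_zero _ _
    (expSum_differentiable (fun S => c (insert a S)) T s)
    (expSum_differentiable c T s) (by simpa using h0) (by simpa using hB)
    (by simpa using expSum_zero_ne _ T (fun S => hc (insert a S)) hne) _ (strip_eventually δ s hs)
  refine h (Function.update (fun i => τ * s i) a (-Real.log r : ℝ)) ?_ ?_
  · intro i
    by_cases hi : i = a
    · subst hi; simpa using hδ
    · simpa [hi] using hτ i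
  · rw [expSum_insert c T a ha, expSum_update _ _ _ ha, expSum_update _ _ _ ha,
      Function.update_self, ← Complex.ofReal_exp, Real.exp_neg, Real.exp_log hr]
    have hr' : (r : ℂ) ≠ 0 := by exact_mod_cast hr.ne'
    push_cast
    field_simp
    linear_combination h1

/-- for `im u ≥ 0`, `u` in the slit plane, `0 ≤ arg (1+u) ≤ arg u` -/
theorem arg_one_add_le (u : ℂ) (hu : u ≠ 0) (h1 : 1 + u ≠ 0) (him : 0 ≤ u.im) :
    0 ≤ (1 + u).arg ∧ (1 + u).arg ≤ u.arg := by
  refine ⟨by rw [Complex.arg_nonneg_iff]; simpa using him, ?_⟩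
  rw [Complex.arg_of_im_nonneg_of_ne_zero him hu,
    Complex.arg_of_im_nonneg_of_ne_zero (by simpa using him) h1]
  apply Real.arccos_le_arccos
  have hp : 0 < ‖u‖ := norm_pos_iff.2 hu
  have hq : 0 < ‖1 + u‖ := norm_pos_iff.2 h1
  rw [div_le_div_iff₀ hp hq]
  have e1 : ‖u‖ ^ 2 = u.re ^ 2 + u.im ^ 2 := by rw [Complex.sq_norm, Complex.normSq_apply]; ring
  have e2 : ‖1 + u‖ ^ 2 = (1 + u.re) ^ 2 + u.im ^ 2 := by
    rw [Complex.sq_norm, Complex.normSq_apply]; simp; ring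
  have e3 : ‖1 + u‖ ≤ 1 + ‖u‖ := by simpa using norm_add_le (1 : ℂ) u
  have e4 : ‖u‖ ≤ ‖1 + u‖ + 1 := by simpa using norm_sub_le (1 + u) 1
  have hre : |u.re| ≤ ‖u‖ := Complex.abs_re_le_norm u
  simp only [Complex.add_re, Complex.one_re]
  have h5 : u.re * (‖1 + u‖ - ‖u‖) ≤ ‖u‖ := by
    calc u.re * (‖1 + u‖ - ‖u‖) ≤ |u.re * (‖1 + u‖ - ‖u‖)| := le_abs_self _
      _ = |u.re| * |‖1 + u‖ - ‖u‖| := abs_mul _ _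
      _ ≤ ‖u‖ * 1 := by
        apply mul_le_mul hre _ (abs_nonneg _) hp.le
        rw [abs_le]; constructor <;> linarith
      _ = ‖u‖ := mul_one _
  nlinarith

theorem log_one_add_im (M : ℂ) (hM : |M.im| < Real.pi) :
    min 0 M.im ≤ (Complex.log (1 + Complex.exp M)).im ∧
      (Complex.log (1 + Complex.exp M)).im ≤ max 0 M.im ∧ 1 + Complex.exp M ∈ Complex.slitPlane := by
  rw [abs_lt] at hM
  have harg : (Complex.exp M).arg = M.im := by
    rw [Complex.arg_exp, toIocMod_eq_self]
    constructor <;> linarith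
  have hs : Complex.exp M ∈ Complex.slitPlane := by
    rw [Complex.mem_slitPlane_iff_arg]
    refine ⟨by rw [harg]; linarith, Complex.exp_ne_zero _⟩
  have hs1 : 1 + Complex.exp M ∈ Complex.slitPlane := by
    rw [Complex.mem_slitPlane_iff] at hs ⊢
    simp only [Complex.add_re, Complex.one_re, Complex.add_im, Complex.one_im, zero_add]
    rcases hs with h | h
    · left; linarith
    · right; exact h
  have hne := Complex.slitPlane_ne_zero hs1
  rw [Complex.log_im]
  rcases le_total 0 (Complex.exp M).im with him | him
  · obtain ⟨h1, h2⟩ := arg_one_add_le _ (Complex.exp_ne_zero M) hne him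
    rw [harg] at h2
    exact ⟨(min_le_left _ _).trans h1, h2.trans (le_max_right _ _), hs1⟩
  · have hc : (starRingEnd ℂ) (1 + Complex.exp M) = 1 + (starRingEnd ℂ) (Complex.exp M) := by simp
    obtain ⟨h1, h2⟩ := arg_one_add_le ((starRingEnd ℂ) (Complex.exp M))
      (by simp)
      (by rw [← hc]; simpa only [ne_eq, map_eq_zero] using hne) (by simpa using him)
    rw [← hc, Complex.arg_conj, if_neg (Complex.slitPlane_arg_ne_pi hs1)] at h1 h2
    rw [Complex.arg_conj, if_neg (Complex.slitPlane_arg_ne_pi hs), harg] at h2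
    exact ⟨(min_le_right _ _).trans (by linarith), (show _ ≤ (0:ℝ) by linarith).trans (le_max_left _ _), hs1⟩

theorem exists_log {ι : Type*} [DecidableEq ι] [Finite ι] (δ : ℝ) (hδ : 0 < δ)
    (U : Set ℂ) (hU : IsPreconnected U) (t₀ : ℂ) (ht₀ : t₀ ∈ U)
    (s : ι → ℂ → ℂ) (hs : ∀ i, DifferentiableOn ℂ (s i) U)
    (hst : ∀ i, ∀ t ∈ U, |(s i t).im| < δ) (hs0 : ∀ i, (s i t₀).im = 0) (T : Finset ι) :
    ∀ (c : Finset ι → ℝ) (_ : ∀ S, 0 ≤ c S) (_ : ∃ S, S ⊆ T ∧ c S ≠ 0) (_ : expStable δ c T),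
    ∃ ℓ : ℂ → ℂ, DifferentiableOn ℂ ℓ U ∧ ∀ t ∈ U,
      Complex.exp (ℓ t) = expSum c T (fun i => s i t) ∧
      ∑ i ∈ T, min 0 (s i t).im ≤ (ℓ t).im ∧ (ℓ t).im ≤ ∑ i ∈ T, max 0 (s i t).im := by
  induction T using Finset.induction_on with
  | empty =>
    intro c hc hne hst
    obtain ⟨S, hS, h⟩ := hne
    rw [Finset.subset_empty] at hS
    subst hS
    refine ⟨fun _ => (Real.log (c ∅) : ℝ), by fun_prop, fun t _ => ⟨?_, ?_, ?_⟩⟩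
    · rw [← Complex.ofReal_exp, Real.exp_log (lt_of_le_of_ne (hc _) h.symm)]
      simp [expSum]
    · simp
    · simp
  | insert a T ha ih =>
    intro c hc hne hstab
    by_cases hA : ∃ S, S ⊆ T ∧ c S ≠ 0
    · have hAs := expStable_left δ hδ c T a ha hc hA hstab
      obtain ⟨lA, dA, hlA⟩ := ih c hc hA hAs
      by_cases hB : ∃ S, S ⊆ T ∧ c (insert a S) ≠ 0
      · have hBs := expStable_right δ hδ c T a ha hc hB hstab
        obtain ⟨lB, dB, hlB⟩ := ih (fun S => c (insert a S)) (fun S => hc _) hB hBs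
        set M : ℂ → ℂ := fun t => lB t + s a t - lA t with hMdef
        have dM : DifferentiableOn ℂ M U := (dB.add (hs a)).sub dA
        have hfac : ∀ t ∈ U, expSum c (insert a T) (fun i => s i t)
            = Complex.exp (lA t) * (1 + Complex.exp (M t)) := by
          intro t ht
          rw [expSum_insert c T a ha, ← (hlA t ht).1, ← (hlB t ht).1, hMdef]
          simp only [mul_add, mul_one, ← Complex.exp_add]
          congr 2; ring
        -- `M` never meets the lines `im = ±π`
        have hneg : ∀ t ∈ U, ∀ r : ℝ, 0 < r → Complex.exp (M t) ≠ -(r : ℂ) := by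
          intro t ht r hr h
          refine hstab (Function.update (fun i => s i t) a (s a t - (Real.log r : ℝ))) ?_ ?_
          · intro i
            by_cases hi : i = a
            · subst hi
              simp only [Function.update_self, Complex.sub_im, Complex.ofReal_im, sub_zero]
              exact hst _ t ht
            · simpa [hi] using hst i t ht
          · rw [expSum_insert c T a ha, expSum_update _ _ _ ha, expSum_update _ _ _ ha,
              Function.update_self, Complex.exp_sub, ← Complex.ofReal_exp, Real.exp_log hr,
              ← (hlA t ht).1, ← (hlB t ht).1]
            have hr' : (r : ℂ) ≠ 0 := by exact_mod_cast hr.ne'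
            have h2 : Complex.exp (s a t) * Complex.exp (lB t)
                = -(r : ℂ) * Complex.exp (lA t) := by
              rw [← h, hMdef, ← Complex.exp_add, ← Complex.exp_add]
              congr 1; ring
            field_simp
            linear_combination h2
        have hpi : ∀ t ∈ U, |(M t).im| ≠ Real.pi := by
          intro t ht h
          apply hneg t ht (Real.exp (M t).re) (Real.exp_pos _)
          have : Complex.exp ((M t).im * Complex.I) = -1 := by
            rcases (abs_eq Real.pi_pos.le).1 h with h | h
            · rw [h, Complex.exp_pi_mul_I]
            · rw [h]; push_cast; rw [neg_mul, Complex.exp_neg, Complex.exp_pi_mul_I]; norm_num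
          conv_lhs => rw [← Complex.re_add_im (M t), Complex.exp_add, this]
          push_cast; ring
        have hM0 : (M t₀).im = 0 := by
          have h1 := hlA t₀ ht₀
          have h2 := hlB t₀ ht₀
          simp only [hs0, min_self, max_self, Finset.sum_const_zero] at h1 h2
          simp only [hMdef, Complex.sub_im, Complex.add_im, hs0]
          linarith [h1.2.1, h1.2.2, h2.2.1, h2.2.2]
        have hMlt : ∀ t ∈ U, |(M t).im| < Real.pi := by
          intro t ht
          by_contra hcon
          push Not at hcon
          have hcont : ContinuousOn (fun t => |(M t).im|) U :=
            (Complex.continuous_im.comp_continuousOn dM.continuousOn).abs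
          have := hU.intermediate_value ht₀ ht hcont
          obtain ⟨t', ht', he⟩ := this (show Real.pi ∈ _ from
            ⟨by simp [hM0, Real.pi_pos.le], hcon⟩)
          exact hpi t' ht' he
        refine ⟨fun t => lA t + Complex.log (1 + Complex.exp (M t)), ?_, ?_⟩
        · refine dA.add (DifferentiableOn.clog (dM.cexp.const_add 1) ?_)
          intro t ht
          exact (log_one_add_im _ (hMlt t ht)).2.2
        · intro t ht
          obtain ⟨b1, b2, b3⟩ := log_one_add_im _ (hMlt t ht)
          refine ⟨?_, ?_, ?_⟩
          · rw [hfac t ht, Complex.exp_add, Complex.exp_log (Complex.slitPlane_ne_zero b3)]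
          · rw [Finset.sum_insert ha, Complex.add_im]
            have := (hlA t ht).2.1
            have := (hlB t ht).2.1
            have := min_le_left 0 (s a t).im
            have := min_le_right 0 (s a t).im
            have e : (M t).im = (lB t).im + (s a t).im - (lA t).im := by simp [hMdef]
            rcases min_choice 0 (M t).im with h | h <;> rw [h] at b1 <;> linarith
          · rw [Finset.sum_insert ha, Complex.add_im]
            have := (hlA t ht).2.2
            have := (hlB t ht).2.2
            have := le_max_left 0 (s a t).im
            have := le_max_right 0 (s a t).im
            have e : (M t).im = (lB t).im + (s a t).im - (lA t).im := by simp [hMdef]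
            rcases max_choice 0 (M t).im with h | h <;> rw [h] at b2 <;> linarith
      · push Not at hB
        refine ⟨lA, dA, fun t ht => ⟨?_, ?_, ?_⟩⟩
        · rw [expSum_insert c T a ha, (hlA t ht).1]
          have : expSum (fun S => c (insert a S)) T (fun i => s i t) = 0 := by
            unfold expSum
            refine Finset.sum_eq_zero fun S hS => ?_
            simp [hB S (Finset.mem_powerset.1 hS)]
          rw [this]; simp
        · rw [Finset.sum_insert ha]
          linarith [(hlA t ht).2.1, min_le_left 0 (s a t).im]
        · rw [Finset.sum_insert ha]
          linarith [(hlA t ht).2.2, le_max_left 0 (s a t).im]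
    · push Not at hA
      have hB : ∃ S, S ⊆ T ∧ c (insert a S) ≠ 0 := by
        obtain ⟨S, hS, h⟩ := hne
        by_cases haS : a ∈ S
        · refine ⟨S.erase a, ?_, by rwa [Finset.insert_erase haS]⟩
          intro i hi
          rw [Finset.mem_erase] at hi
          exact (Finset.mem_insert.1 (hS hi.2)).resolve_left hi.1
        · exact absurd (hA S (fun i hi => (Finset.mem_insert.1 (hS hi)).resolve_left
            (by rintro rfl; exact haS hi))) h
      have hBs := expStable_right δ hδ c T a ha hc hB hstab
      obtain ⟨lB, dB, hlB⟩ := ih (fun S => c (insert a S)) (fun S => hc _) hB hBs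
      refine ⟨fun t => s a t + lB t, (hs a).add dB, fun t ht => ⟨?_, ?_, ?_⟩⟩
      · rw [expSum_insert c T a ha, Complex.exp_add, (hlB t ht).1]
        have : expSum c T (fun i => s i t) = 0 := by
          unfold expSum
          refine Finset.sum_eq_zero fun S hS => ?_
          rw [hA S (Finset.mem_powerset.1 hS)]; simp
        rw [this]; simp
      · rw [Finset.sum_insert ha, Complex.add_im]
        linarith [(hlB t ht).2.1, min_le_right 0 (s a t).im]
      · rw [Finset.sum_insert ha, Complex.add_im]
        linarith [(hlB t ht).2.2, le_max_right 0 (s a t).im]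

theorem normSq_sub_conj (a b : ℂ) :
    ‖a - (starRingEnd ℂ) b‖ ^ 2 = ‖a - b‖ ^ 2 + 4 * a.im * b.im := by
  rw [Complex.sq_norm, Complex.sq_norm, Complex.normSq_apply, Complex.normSq_apply]
  simp
  ring

theorem sub_conj_ne (a b : ℂ) (ha : 0 < a.im) (hb : 0 < b.im) : a - (starRingEnd ℂ) b ≠ 0 := by
  intro h
  have := congrArg Complex.im h
  simp at this
  linarith

theorem schwarz_pick (h : ℂ → ℂ) (hd : DifferentiableOn ℂ h {z | 0 < z.im})
    (hm : ∀ z : ℂ, 0 < z.im → 0 < (h z).im) (z w : ℂ) (hz : 0 < z.im) (hw : 0 < w.im) :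
    ‖h z - h w‖ ^ 2 * (z.im * w.im) ≤ ‖z - w‖ ^ 2 * ((h z).im * (h w).im) := by
  set ψ : ℂ → ℂ := fun ξ => (w - (starRingEnd ℂ) w * ξ) / (1 - ξ) with hψ
  set g : ℂ → ℂ := fun ξ => (h (ψ ξ) - h w) / (h (ψ ξ) - (starRingEnd ℂ) (h w)) with hg
  have hne : ∀ ξ ∈ Metric.ball (0 : ℂ) 1, 1 - ξ ≠ 0 := by
    intro ξ hξ h0
    have : ξ = 1 := by linear_combination -h0
    simp [this] at hξ
  have hψm : ∀ ξ ∈ Metric.ball (0 : ℂ) 1, 0 < (ψ ξ).im := by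
    intro ξ hξ
    have h1 := hne ξ hξ
    have h2 : 0 < Complex.normSq (1 - ξ) := Complex.normSq_pos.2 h1
    have h3 : ‖ξ‖ ^ 2 < 1 := by
      have : ‖ξ‖ < 1 := by simpa using hξ
      nlinarith [norm_nonneg ξ]
    rw [Complex.sq_norm, Complex.normSq_apply] at h3
    have : (ψ ξ).im = w.im * (1 - (ξ.re * ξ.re + ξ.im * ξ.im)) / Complex.normSq (1 - ξ) := by
      simp only [hψ, Complex.div_im]
      rw [← sub_div]
      congr 1
      simp
      ring
    rw [this]
    apply div_pos _ h2
    apply mul_pos hw; linarith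
  have hgd : DifferentiableOn ℂ g (Metric.ball 0 1) := by
    have hψd : DifferentiableOn ℂ ψ (Metric.ball 0 1) := by
      apply DifferentiableOn.div
      · fun_prop
      · fun_prop
      · exact hne
    have hc : DifferentiableOn ℂ (fun ξ => h (ψ ξ)) (Metric.ball 0 1) := hd.comp hψd hψm
    apply DifferentiableOn.div
    · exact hc.sub_const _
    · exact hc.sub_const _
    · intro ξ hξ
      exact sub_conj_ne _ _ (hm _ (hψm ξ hξ)) (hm _ hw)
  have hg0 : g 0 = 0 := by simp [hg, hψ]
  have hgm : Set.MapsTo g (Metric.ball 0 1) (Metric.closedBall (g 0) 1) := by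
    intro ξ hξ
    rw [hg0, mem_closedBall_zero_iff]
    simp only [hg, norm_div]
    apply div_le_one_of_le₀ _ (norm_nonneg _)
    apply le_of_sq_le_sq _ (norm_nonneg _)
    rw [normSq_sub_conj]
    have := mul_pos (hm _ (hψm ξ hξ)) (hm _ hw)
    nlinarith
  have hzw := sub_conj_ne z w hz hw
  have hzwp : 0 < ‖z - (starRingEnd ℂ) w‖ := norm_pos_iff.2 hzw
  have hξ0 : (z - w) / (z - (starRingEnd ℂ) w) ∈ Metric.ball (0 : ℂ) 1 := by
    rw [mem_ball_zero_iff, norm_div, div_lt_one hzwp]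
    apply lt_of_pow_lt_pow_left₀ 2 (norm_nonneg _)
    rw [normSq_sub_conj]
    have := mul_pos hz hw
    nlinarith
  have hψz : ψ ((z - w) / (z - (starRingEnd ℂ) w)) = z := by
    have hw' : w - (starRingEnd ℂ) w ≠ 0 := sub_conj_ne w w hw hw
    simp only [hψ]
    rw [div_eq_iff (hne _ hξ0)]
    field_simp
    ring
  have key := Complex.dist_le_div_mul_dist_of_mapsTo_ball hgd hgm hξ0
  rw [hg0, dist_zero_right, dist_zero_right] at key
  simp only [hg] at key
  rw [hψz, norm_div, norm_div] at key
  have hhp : 0 < ‖h z - (starRingEnd ℂ) (h w)‖ :=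
    norm_pos_iff.2 (sub_conj_ne _ _ (hm _ hz) (hm _ hw))
  rw [div_one, one_mul, div_le_div_iff₀ hhp hzwp] at key
  have k2 := pow_le_pow_left₀ (by positivity) key 2
  rw [mul_pow, mul_pow, normSq_sub_conj, normSq_sub_conj] at k2
  nlinarith

open Filter Topology in
theorem im_div_tendsto (h : ℂ → ℂ) (t d : ℝ) (hd : HasDerivAt h (d : ℂ) (t : ℂ))
    (hr : (h t).im = 0) :
    Tendsto (fun ε : ℝ => (h (t + ε * Complex.I)).im / ε) (𝓝[>] 0) (𝓝 d) := by
  have h1 : HasDerivAt (fun ε : ℝ => (t : ℂ) + ε * Complex.I) Complex.I 0 := by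
    simpa using ((Complex.ofRealCLM.hasDerivAt (x := (0:ℝ))).mul_const Complex.I).const_add (t : ℂ)
  have h2 : HasDerivAt (fun ε : ℝ => h ((t : ℂ) + ε * Complex.I)) ((d : ℂ) * Complex.I) 0 := by
    apply HasDerivAt.comp (𝕜' := ℂ) (h₂ := h) (h := fun ε : ℝ => (t : ℂ) + ε * Complex.I) 0 _ h1
    simpa using hd
  have h3 : HasDerivAt (fun ε : ℝ => (h ((t : ℂ) + ε * Complex.I)).im) d 0 := by
    have h5 := Complex.imCLM.hasFDerivAt.comp_hasDerivAt (0 : ℝ) h2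
    have h6 : Complex.imCLM ((d : ℂ) * Complex.I) = d := by simp
    rw [h6] at h5
    exact h5
  have h4 := h3.hasDerivWithinAt (s := Set.Ioi 0)
  rw [hasDerivWithinAt_iff_tendsto_slope' (by simp)] at h4
  refine h4.congr fun ε => ?_
  simp [slope_def_field, hr]

open Filter Topology in
theorem loewner (h : ℂ → ℂ) (hd : DifferentiableOn ℂ h Complex.slitPlane)
    (hm : ∀ z : ℂ, 0 < z.im → 0 < (h z).im) (g : ℝ → ℝ) (hg : ∀ t : ℝ, 0 < t → h t = g t) :
    ∃ g' : ℝ → ℝ, (∀ t, 0 < t → HasDerivAt g (g' t) t) ∧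
      ∀ s t, 0 < s → 0 < t → (g s - g t) ^ 2 ≤ (s - t) ^ 2 * (g' s * g' t) := by
  have hder : ∀ t : ℝ, 0 < t → HasDerivAt h (deriv h t) t := fun t ht =>
    ((hd t (by simpa [Complex.mem_slitPlane_iff] using ht)).differentiableAt
      (Complex.isOpen_slitPlane.mem_nhds (by simpa [Complex.mem_slitPlane_iff] using ht))).hasDerivAt
  have hreal : ∀ t : ℝ, 0 < t → HasDerivAt g (deriv h t).re t := by
    intro t ht
    have := (hder t ht).real_of_complex
    refine this.congr_of_eventuallyEq ?_
    filter_upwards [lt_mem_nhds ht] with u hu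
    rw [hg u hu]; simp
  have him : ∀ t : ℝ, 0 < t → (deriv h t) = ((deriv h t).re : ℂ) := by
    intro t ht
    have h1 := (hder t ht).comp_ofReal
    have h2 := (hreal t ht).ofReal_comp
    refine h1.unique (h2.congr_of_eventuallyEq ?_)
    filter_upwards [lt_mem_nhds ht] with u hu
    rw [hg u hu]
  refine ⟨fun t => (deriv h t).re, hreal, fun s t hs ht => ?_⟩
  have hsub : {z : ℂ | 0 < z.im} ⊆ Complex.slitPlane := fun z hz => by
    rw [Complex.mem_slitPlane_iff]; right; exact (ne_of_gt hz)
  have l1 := im_div_tendsto h s _ (by rw [← him s hs]; exact hder s hs) (by rw [hg s hs]; simp)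
  have l2 := im_div_tendsto h t _ (by rw [← him t ht]; exact hder t ht) (by rw [hg t ht]; simp)
  have lc : ∀ u : ℝ, 0 < u →
      Tendsto (fun ε : ℝ => h (u + ε * Complex.I)) (𝓝[>] 0) (𝓝 (g u : ℂ)) := by
    intro u hu
    have hc : ContinuousAt (fun ε : ℝ => h (u + ε * Complex.I)) 0 := by
      apply ContinuousAt.comp (g := h)
      · simpa using (hder u hu).continuousAt
      · fun_prop
    have := hc.tendsto
    simp only [Complex.ofReal_zero, zero_mul, add_zero, hg u hu] at this
    exact this.mono_left nhdsWithin_le_nhds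
  have l3 : Tendsto (fun ε : ℝ => ‖h (s + ε * Complex.I) - h (t + ε * Complex.I)‖ ^ 2) (𝓝[>] 0)
      (𝓝 ((g s - g t) ^ 2)) := by
    have := (((lc s hs).sub (lc t ht)).norm).pow 2
    rwa [← Complex.ofReal_sub, Complex.norm_real, Real.norm_eq_abs, sq_abs] at this
  refine le_of_tendsto_of_tendsto l3 ((l1.mul l2).const_mul ((s - t) ^ 2)) ?_
  filter_upwards [self_mem_nhdsWithin] with ε hε
  have hε' : (0 : ℝ) < ε := hε
  have := schwarz_pick h (hd.mono hsub) hm (s + ε * Complex.I) (t + ε * Complex.I)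
    (by simpa using hε') (by simpa using hε')
  have e : (s + ε * Complex.I : ℂ) - (t + ε * Complex.I) = ((s - t : ℝ) : ℂ) := by push_cast; ring
  rw [e, Complex.norm_real, Real.norm_eq_abs, sq_abs] at this
  simp only [Complex.add_im, Complex.ofReal_im, Complex.mul_im, Complex.ofReal_re, Complex.I_im,
    Complex.I_re, mul_one, mul_zero, add_zero, zero_add] at this
  rw [div_mul_div_comm, ← mul_div_assoc, le_div_iff₀ (by positivity)]
  exact this

open Filter Topology in
theorem pick_growth (g g' : ℝ → ℝ) (b : ℝ) (hb : 0 < b)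
    (hder : ∀ t, 0 < t → HasDerivAt g (g' t) t)
    (hL : ∀ s t, 0 < s → 0 < t → (g s - g t) ^ 2 ≤ (s - t) ^ 2 * (g' s * g' t))
    (hanti : AntitoneOn (fun t => g t / t) (Set.Ioi 0))
    (hlim : Tendsto (fun t => g t / t) atTop (𝓝 b)) (hmono : MonotoneOn g (Set.Ioi 0))
    (s t : ℝ) (hs : 0 < s) (hst : s ≤ t) : b * (t - s) ≤ g t - g s := by
  have hg'0 : ∀ t, 0 < t → 0 ≤ g' t := by
    intro t ht
    have := hmono.derivWithin_nonneg (x := t)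
    rwa [derivWithin_of_isOpen isOpen_Ioi ht, (hder t ht).deriv] at this
  have hg'1 : ∀ t, 0 < t → g' t ≤ g t / t := by
    intro t ht
    have := hanti.derivWithin_nonpos (x := t)
    have hd2 : HasDerivAt (fun t => g t / t) ((g' t * t - g t * 1) / t ^ 2) t :=
      (hder t ht).div (hasDerivAt_id t) ht.ne'
    rw [derivWithin_of_isOpen isOpen_Ioi ht, hd2.deriv] at this
    simp only [mul_one] at this
    rw [le_div_iff₀ ht]
    by_contra hcon
    push Not at hcon
    have : 0 < (g' t * t - g t) / t ^ 2 := by apply div_pos <;> [linarith; positivity]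
    linarith
  have hb' : ∀ u, 0 < u → b ≤ g' u := by
    intro u hu
    have l1 : Tendsto (fun R : ℝ => ((g R / R - g u / R) / (1 - u / R)) ^ 2) atTop (𝓝 (b ^ 2)) := by
      have a1 : Tendsto (fun R : ℝ => g u / R) atTop (𝓝 0) := tendsto_const_nhds.div_atTop tendsto_id
      have a2 : Tendsto (fun R : ℝ => u / R) atTop (𝓝 0) := tendsto_const_nhds.div_atTop tendsto_id
      have := ((hlim.sub a1).div (a2.const_sub 1) (by norm_num)).pow 2
      simpa using this
    have l2 : Tendsto (fun R : ℝ => g' u * (g R / R)) atTop (𝓝 (g' u * b)) := hlim.const_mul _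
    have : b ^ 2 ≤ g' u * b := by
      refine le_of_tendsto_of_tendsto l1 l2 ?_
      filter_upwards [eventually_gt_atTop u] with R hR
      have hR0 : 0 < R := hu.trans hR
      have e : (g R / R - g u / R) / (1 - u / R) = (g R - g u) / (R - u) := by
        have : R - u ≠ 0 := by linarith
        field_simp
      rw [e, div_pow, div_le_iff₀ (by have : 0 < R - u := by linarith
                                      positivity)]
      have h1 := hL R u hR0 hu
      have h2 : g' R * g' u ≤ g' u * (g R / R) := by
        rw [mul_comm]; exact mul_le_mul_of_nonneg_left (hg'1 R hR0) (hg'0 u hu)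
      nlinarith [sq_nonneg (R - u)]
    nlinarith
  have hmo : MonotoneOn (fun t => g t - b * t) (Set.Ioi 0) := by
    have hd : ∀ t, 0 < t → HasDerivAt (fun t => g t - b * t) (g' t - b) t := fun t ht => by
      have h5 := (hder t ht).sub ((hasDerivAt_id t).const_mul b)
      rw [mul_one] at h5
      exact h5
    apply monotoneOn_of_deriv_nonneg (convex_Ioi 0)
    · exact fun t ht => (hd t ht).continuousAt.continuousWithinAt
    · rw [interior_Ioi]
      exact fun t ht => (hd t ht).differentiableAt.differentiableWithinAt
    · rw [interior_Ioi]
      intro t ht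
      rw [(hd t ht).deriv]
      linarith [hb' t ht]
  have := hmo (show s ∈ Set.Ioi 0 from hs) (show t ∈ Set.Ioi 0 from lt_of_lt_of_le hs hst) hst
  simp only at this
  nlinarith

theorem sub_arg (t : ℂ) (ht : t ∈ Complex.slitPlane) (a b : ℝ) (ha : 0 < a) (hb : 0 < b) :
    (a + t * b : ℂ) ∈ Complex.slitPlane ∧
    (0 < t.im → 0 < (a + t * b : ℂ).arg ∧ (a + t * b : ℂ).arg < Real.pi) ∧
    (t.im < 0 → -Real.pi < (a + t * b : ℂ).arg ∧ (a + t * b : ℂ).arg < 0) ∧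
    (t.im = 0 → (a + t * b : ℂ).arg = 0) := by
  have hre : (a + t * b : ℂ).re = a + t.re * b := by simp
  have him : (a + t * b : ℂ).im = t.im * b := by simp
  have hs : (a + t * b : ℂ) ∈ Complex.slitPlane := by
    rw [Complex.mem_slitPlane_iff] at ht ⊢
    rw [hre, him]
    by_cases h : t.im = 0
    · left
      have : 0 < t.re := ht.resolve_right (fun h' => h' h)
      positivity
    · right; positivity
  have hne := Complex.slitPlane_arg_ne_pi hs
  refine ⟨hs, fun h => ?_, fun h => ?_, fun h => ?_⟩
  · have h0 : 0 ≤ (a + t * b : ℂ).arg := by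
      rw [Complex.arg_nonneg_iff, him]; positivity
    refine ⟨lt_of_le_of_ne h0 ?_, lt_of_le_of_ne (Complex.arg_le_pi _) hne⟩
    intro h1
    have := (Complex.arg_eq_zero_iff.1 h1.symm).2
    rw [him] at this
    have : 0 < t.im * b := by positivity
    linarith
  · refine ⟨Complex.neg_pi_lt_arg _, ?_⟩
    rw [Complex.arg_neg_iff, him]
    exact mul_neg_of_neg_of_pos h hb
  · rw [Complex.arg_eq_zero_iff, hre, him, h]
    have : 0 < t.re := by
      rw [Complex.mem_slitPlane_iff] at ht
      exact ht.resolve_right (fun h' => h' h)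
    constructor
    · positivity
    · simp

noncomputable def homPoly {n : ℕ} (β : ℝ) (c : Finset (Fin n) → ℝ) (p : (Fin n → ℝ) × (Fin n → ℝ)) :
    ℝ := ∑ S : Finset (Fin n), c S * ((∏ i ∈ S, p.1 i ^ β) * ∏ i ∈ Sᶜ, p.2 i ^ β)

def posPair {n : ℕ} (p : (Fin n → ℝ) × (Fin n → ℝ)) : Prop := (∀ i, 0 < p.1 i) ∧ (∀ i, 0 < p.2 i)

theorem homPoly_pos {n : ℕ} (β : ℝ) (c : Finset (Fin n) → ℝ) (hc : ∀ S, 0 ≤ c S)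
    (hne : ∃ S, c S ≠ 0) (p : (Fin n → ℝ) × (Fin n → ℝ)) (hp : posPair p) : 0 < homPoly β c p := by
  have hq : ∀ S : Finset (Fin n), 0 < (∏ i ∈ S, p.1 i ^ β) * ∏ i ∈ Sᶜ, p.2 i ^ β := fun S =>
    mul_pos (Finset.prod_pos fun i _ => Real.rpow_pos_of_pos (hp.1 i) _)
      (Finset.prod_pos fun i _ => Real.rpow_pos_of_pos (hp.2 i) _)
  obtain ⟨S, hS⟩ := hne
  exact Finset.sum_pos' (fun S _ => mul_nonneg (hc S) (hq S).le)
    ⟨S, Finset.mem_univ _, mul_pos (lt_of_le_of_ne (hc S) hS.symm) (hq S)⟩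

theorem homPoly_mono {n : ℕ} (β : ℝ) (hβ : 0 ≤ β) (c : Finset (Fin n) → ℝ) (hc : ∀ S, 0 ≤ c S)
    (p q : (Fin n → ℝ) × (Fin n → ℝ)) (hp : posPair p) (h1 : ∀ i, p.1 i ≤ q.1 i)
    (h2 : ∀ i, p.2 i ≤ q.2 i) : homPoly β c p ≤ homPoly β c q := by
  unfold homPoly
  refine Finset.sum_le_sum fun S _ => mul_le_mul_of_nonneg_left ?_ (hc S)
  refine mul_le_mul ?_ ?_ ?_ ?_
  · exact Finset.prod_le_prod (fun i _ => Real.rpow_nonneg (hp.1 i).le _)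
      (fun i _ => Real.rpow_le_rpow (hp.1 i).le (h1 i) hβ)
  · exact Finset.prod_le_prod (fun i _ => Real.rpow_nonneg (hp.2 i).le _)
      (fun i _ => Real.rpow_le_rpow (hp.2 i).le (h2 i) hβ)
  · exact Finset.prod_nonneg fun i _ => Real.rpow_nonneg (hp.2 i).le _
  · exact Finset.prod_nonneg fun i _ => Real.rpow_nonneg ((hp.1 i).le.trans (h1 i)) _

theorem homPoly_smul {n : ℕ} (β : ℝ) (c : Finset (Fin n) → ℝ) (r : ℝ) (hr : 0 < r)
    (p : (Fin n → ℝ) × (Fin n → ℝ)) (hp : posPair p) :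
    homPoly β c (r • p) = r ^ (n * β) * homPoly β c p := by
  unfold homPoly
  rw [Finset.mul_sum]
  refine Finset.sum_congr rfl fun S _ => ?_
  have e1 : ∏ i ∈ S, (r • p).1 i ^ β = (∏ i ∈ S, r ^ β) * ∏ i ∈ S, p.1 i ^ β := by
    rw [← Finset.prod_mul_distrib]
    exact Finset.prod_congr rfl fun i _ => by simp [Real.mul_rpow hr.le (hp.1 i).le]
  have e2 : ∏ i ∈ Sᶜ, (r • p).2 i ^ β = (∏ i ∈ Sᶜ, r ^ β) * ∏ i ∈ Sᶜ, p.2 i ^ β := by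
    rw [← Finset.prod_mul_distrib]
    exact Finset.prod_congr rfl fun i _ => by simp [Real.mul_rpow hr.le (hp.2 i).le]
  have e3 : (∏ i ∈ S, r ^ β) * (∏ i ∈ Sᶜ, r ^ β) = r ^ (n * β) := by
    rw [Finset.prod_mul_prod_compl S (fun _ => r ^ β), Finset.prod_const, Finset.card_univ,
      Fintype.card_fin, mul_comm, Real.rpow_mul hr.le, Real.rpow_natCast]
  rw [e1, e2, ← e3]
  ring

open Filter Topology in
theorem homPoly_continuousAt {n : ℕ} (β : ℝ) (c : Finset (Fin n) → ℝ)
    (p : (Fin n → ℝ) × (Fin n → ℝ)) (hp : posPair p) : ContinuousAt (homPoly β c) p := by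
  unfold homPoly
  refine tendsto_finsetSum _ fun S _ => Tendsto.const_mul _ (Tendsto.mul ?_ ?_)
  · refine tendsto_finsetProd _ fun i _ => ?_
    have : ContinuousAt (fun q : (Fin n → ℝ) × (Fin n → ℝ) => q.1 i) p := by fun_prop
    exact this.rpow_const (Or.inl (hp.1 i).ne')
  · refine tendsto_finsetProd _ fun i _ => ?_
    have : ContinuousAt (fun q : (Fin n → ℝ) × (Fin n → ℝ) => q.2 i) p := by fun_prop
    exact this.rpow_const (Or.inl (hp.2 i).ne')

theorem posPair_add_smul {n : ℕ} (p q : (Fin n → ℝ) × (Fin n → ℝ)) (hp : posPair p)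
    (hq : posPair q) (t : ℝ) (ht : 0 ≤ t) : posPair (p + t • q) := by
  constructor
  · intro i
    have h1 := hp.1 i
    have h2 := hq.1 i
    simp only [Prod.fst_add, Prod.smul_fst, Pi.add_apply, Pi.smul_apply, smul_eq_mul]
    positivity
  · intro i
    have h1 := hp.2 i
    have h2 := hq.2 i
    simp only [Prod.snd_add, Prod.smul_snd, Pi.add_apply, Pi.smul_apply, smul_eq_mul]
    positivity

theorem exists_pick {n : ℕ} (hn : n ≠ 0) (β : ℝ) (hβ : 0 < β) (c : Finset (Fin n) → ℝ)
    (hc : ∀ S, 0 ≤ c S) (hne : ∃ S, c S ≠ 0)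
    (hstab : expStable (β * Real.pi) c Finset.univ)
    (p q : (Fin n → ℝ) × (Fin n → ℝ)) (hp : posPair p) (hq : posPair q) :
    ∃ h : ℂ → ℂ, DifferentiableOn ℂ h Complex.slitPlane ∧ (∀ z : ℂ, 0 < z.im → 0 < (h z).im) ∧
      ∀ t : ℝ, 0 < t → h t = ((homPoly β c (p + t • q) ^ (1 / (n * β)) : ℝ) : ℂ) := by
  have hn' : (0 : ℝ) < n := by positivity
  set ζ : Fin n → ℂ → ℂ := fun i t => β * Complex.log (p.1 i + t * q.1 i) with hζ
  set ω : Fin n → ℂ → ℂ := fun i t => β * Complex.log (p.2 i + t * q.2 i) with hω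
  have dζ : ∀ i, DifferentiableOn ℂ (ζ i) Complex.slitPlane := fun i =>
    (DifferentiableOn.clog (by fun_prop)
      (fun t ht => (sub_arg t ht _ _ (hp.1 i) (hq.1 i)).1)).const_mul _
  have dω : ∀ i, DifferentiableOn ℂ (ω i) Complex.slitPlane := fun i =>
    (DifferentiableOn.clog (by fun_prop)
      (fun t ht => (sub_arg t ht _ _ (hp.2 i) (hq.2 i)).1)).const_mul _
  have iζ : ∀ i t, (ζ i t).im = β * (p.1 i + t * q.1 i : ℂ).arg := fun i t => by
    simp [hζ, Complex.log_im]
  have iω : ∀ i t, (ω i t).im = β * (p.2 i + t * q.2 i : ℂ).arg := fun i t => by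
    simp [hω, Complex.log_im]
  have hU : IsPreconnected Complex.slitPlane :=
    (Complex.starConvex_one_slitPlane.isPathConnected (by simp)).isConnected.isPreconnected
  obtain ⟨ℓ, dℓ, hℓ⟩ := exists_log (β * Real.pi) (by positivity) Complex.slitPlane hU 1 (by simp)
    (fun i t => ζ i t - ω i t) (fun i => (dζ i).sub (dω i))
    (by
      intro i t ht
      obtain ⟨-, a1, a2, a3⟩ := sub_arg t ht _ _ (hp.1 i) (hq.1 i)
      obtain ⟨-, b1, b2, b3⟩ := sub_arg t ht _ _ (hp.2 i) (hq.2 i)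
      rw [Complex.sub_im, iζ, iω, ← mul_sub, abs_mul, abs_of_pos hβ]
      refine mul_lt_mul_of_pos_left ?_ hβ
      rw [abs_lt]
      rcases lt_trichotomy t.im 0 with h | h | h
      · have := a2 h
        have := b2 h
        constructor <;> linarith
      · rw [a3 h, b3 h]
        constructor <;> linarith [Real.pi_pos]
      · have := a1 h
        have := b1 h
        constructor <;> linarith)
    (by
      intro i
      rw [Complex.sub_im, iζ, iω, (sub_arg 1 (by simp) _ _ (hp.1 i) (hq.1 i)).2.2.2 (by simp),
        (sub_arg 1 (by simp) _ _ (hp.2 i) (hq.2 i)).2.2.2 (by simp)]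
      simp)
    Finset.univ c hc (by simpa using hne) hstab
  set L : ℂ → ℂ := fun t => ∑ i, ω i t + ℓ t with hL
  have dL : DifferentiableOn ℂ L Complex.slitPlane :=
    (DifferentiableOn.fun_sum fun i _ => dω i).add dℓ
  have hLlow : ∀ t ∈ Complex.slitPlane, ∑ i, min (ω i t).im (ζ i t).im ≤ (L t).im := by
    intro t ht
    simp only [hL, Complex.add_im, Complex.im_sum]
    refine le_trans (le_of_eq ?_) (add_le_add_right (hℓ t ht).2.1 _)
    rw [← Finset.sum_add_distrib]
    refine Finset.sum_congr rfl fun i _ => ?_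
    rw [← min_add_add_left, Complex.sub_im]; simp
  have hLup : ∀ t ∈ Complex.slitPlane, (L t).im ≤ ∑ i, max (ω i t).im (ζ i t).im := by
    intro t ht
    simp only [hL, Complex.add_im, Complex.im_sum]
    refine le_trans (add_le_add_right (hℓ t ht).2.2 _) (le_of_eq ?_)
    rw [← Finset.sum_add_distrib]
    refine Finset.sum_congr rfl fun i _ => ?_
    rw [← max_add_add_left, Complex.sub_im]; simp
  have hLexp : ∀ t ∈ Complex.slitPlane, Complex.exp (L t) = ∑ S : Finset (Fin n),
      (c S : ℂ) * ((∏ i ∈ S, Complex.exp (ζ i t)) * ∏ i ∈ Sᶜ, Complex.exp (ω i t)) := by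
    intro t ht
    simp only [hL]
    rw [Complex.exp_add, (hℓ t ht).1, expSum, Finset.powerset_univ, Finset.mul_sum]
    refine Finset.sum_congr rfl fun S _ => ?_
    rw [← Complex.exp_sum, ← Complex.exp_sum, mul_left_comm, ← Complex.exp_add, ← Complex.exp_add,
      ← Finset.sum_add_sum_compl S (fun i => ω i t), Finset.sum_sub_distrib]
    congr 2; ring
  refine ⟨fun t => Complex.exp (L t / ((n * β : ℝ) : ℂ)), (dL.div_const _).cexp, ?_, ?_⟩
  · intro t ht
    have hts : t ∈ Complex.slitPlane := by
      rw [Complex.mem_slitPlane_iff]; right; exact ne_of_gt ht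
    have hnβ : 0 < n * β := by positivity
    have hne : (Finset.univ : Finset (Fin n)).Nonempty := by
      have : NeZero n := ⟨hn⟩
      exact Finset.univ_nonempty
    have h1 : 0 < (L t).im := by
      refine lt_of_lt_of_le (Finset.sum_pos (fun i _ => ?_) hne) (hLlow t hts)
      rw [lt_min_iff, iζ, iω]
      exact ⟨mul_pos hβ ((sub_arg t hts _ _ (hp.2 i) (hq.2 i)).2.1 ht).1,
        mul_pos hβ ((sub_arg t hts _ _ (hp.1 i) (hq.1 i)).2.1 ht).1⟩
    have h2 : (L t).im < n * β * Real.pi := by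
      refine lt_of_le_of_lt (hLup t hts) ?_
      have : ∑ i : Fin n, β * Real.pi = n * β * Real.pi := by simp; ring
      rw [← this]
      refine Finset.sum_lt_sum_of_nonempty hne fun i _ => ?_
      rw [max_lt_iff, iζ, iω]
      exact ⟨mul_lt_mul_of_pos_left ((sub_arg t hts _ _ (hp.2 i) (hq.2 i)).2.1 ht).2 hβ,
        mul_lt_mul_of_pos_left ((sub_arg t hts _ _ (hp.1 i) (hq.1 i)).2.1 ht).2 hβ⟩
    rw [Complex.exp_im, Complex.div_ofReal_im]
    refine mul_pos (Real.exp_pos _) (Real.sin_pos_of_pos_of_lt_pi (by positivity) ?_)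
    rw [div_lt_iff₀ hnβ]; linarith
  · intro t ht
    have hts : (t : ℂ) ∈ Complex.slitPlane := by simpa [Complex.mem_slitPlane_iff] using ht
    have zζ : ∀ i, (ζ i t).im = 0 := fun i => by
      rw [iζ, (sub_arg t hts _ _ (hp.1 i) (hq.1 i)).2.2.2 (by simp), mul_zero]
    have zω : ∀ i, (ω i t).im = 0 := fun i => by
      rw [iω, (sub_arg t hts _ _ (hp.2 i) (hq.2 i)).2.2.2 (by simp), mul_zero]
    have hLim : (L t).im = 0 := by
      have h1 := hLlow t hts
      have h2 := hLup t hts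
      simp only [zζ, zω, min_self, max_self, Finset.sum_const_zero] at h1 h2
      linarith
    have hLre : L t = ((L t).re : ℂ) := by
      apply Complex.ext <;> simp [hLim]
    have hpos := posPair_add_smul p q hp hq t ht.le
    have eζ : ∀ i, Complex.exp (ζ i t) = (((p + t • q).1 i ^ β : ℝ) : ℂ) := fun i => by
      rw [Real.rpow_def_of_pos (hpos.1 i), Complex.ofReal_exp]
      congr 1
      rw [Complex.ofReal_mul, Complex.ofReal_log (hpos.1 i).le]
      simp [hζ]; ring
    have eω : ∀ i, Complex.exp (ω i t) = (((p + t • q).2 i ^ β : ℝ) : ℂ) := fun i => by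
      rw [Real.rpow_def_of_pos (hpos.2 i), Complex.ofReal_exp]
      congr 1
      rw [Complex.ofReal_mul, Complex.ofReal_log (hpos.2 i).le]
      simp [hω]; ring
    have hE : Real.exp (L t).re = homPoly β c (p + t • q) := by
      have h1 := hLexp t hts
      rw [hLre, ← Complex.ofReal_exp] at h1
      simp only [eζ, eω] at h1
      unfold homPoly
      exact_mod_cast h1
    have hPp := homPoly_pos β c hc hne _ hpos
    simp only
    rw [hLre, Real.rpow_def_of_pos hPp, ← hE, Real.log_exp, ← Complex.ofReal_div,
      ← Complex.ofReal_exp]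
    congr 2; ring

open Filter Topology in
theorem hom_growth {n : ℕ} (hn : n ≠ 0) (β : ℝ) (hβ : 0 < β) (c : Finset (Fin n) → ℝ)
    (hc : ∀ S, 0 ≤ c S) (hne : ∃ S, c S ≠ 0)
    (hstab : expStable (β * Real.pi) c Finset.univ)
    (p q : (Fin n → ℝ) × (Fin n → ℝ)) (hp : posPair p) (hq : posPair q)
    (s t : ℝ) (hs : 0 < s) (hst : s ≤ t) :
    homPoly β c q ^ (1 / (n * β)) * (t - s) ≤
      homPoly β c (p + t • q) ^ (1 / (n * β)) - homPoly β c (p + s • q) ^ (1 / (n * β)) := by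
  have hn' : (0 : ℝ) < n := by positivity
  have hnβ : 0 < n * β := by positivity
  obtain ⟨h, hd, hm, hreal⟩ := exists_pick hn β hβ c hc hne hstab p q hp hq
  obtain ⟨g', hg', hL⟩ := loewner h hd hm _ hreal
  have hquot : ∀ t : ℝ, 0 < t → homPoly β c (p + t • q) ^ (1 / (n * β)) / t
      = homPoly β c (q + t⁻¹ • p) ^ (1 / (n * β)) := by
    intro t ht
    have e : p + t • q = t • (q + t⁻¹ • p) := by
      rw [smul_add, smul_smul, mul_inv_cancel₀ ht.ne', one_smul, add_comm]
    have hpos := posPair_add_smul q p hq hp t⁻¹ (by positivity)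
    rw [e, homPoly_smul β c t ht _ hpos, Real.mul_rpow (by positivity)
      (homPoly_pos β c hc hne _ hpos).le, ← Real.rpow_mul ht.le, mul_one_div_cancel hnβ.ne',
      Real.rpow_one]
    field_simp
  have hmonoP : ∀ (p q : (Fin n → ℝ) × (Fin n → ℝ)), posPair p → posPair q → ∀ a b : ℝ, 0 ≤ a →
      a ≤ b → homPoly β c (p + a • q) ^ (1 / (n * β)) ≤ homPoly β c (p + b • q) ^ (1 / (n * β)) := by
    intro p q hp hq a b ha hab
    have hpos := posPair_add_smul p q hp hq a ha
    refine Real.rpow_le_rpow (homPoly_pos β c hc hne _ hpos).le ?_ (by positivity)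
    refine homPoly_mono β hβ.le c hc _ _ hpos ?_ ?_
    · intro i
      simp only [Prod.fst_add, Prod.smul_fst, Pi.add_apply, Pi.smul_apply, smul_eq_mul]
      have := mul_le_mul_of_nonneg_right hab (hq.1 i).le
      linarith
    · intro i
      simp only [Prod.snd_add, Prod.smul_snd, Pi.add_apply, Pi.smul_apply, smul_eq_mul]
      have := mul_le_mul_of_nonneg_right hab (hq.2 i).le
      linarith
  refine pick_growth _ g' _ (Real.rpow_pos_of_pos (homPoly_pos β c hc hne q hq) _) hg' hL
    ?_ ?_ ?_ s t hs hst
  · intro a ha b hb hab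
    simp only
    rw [hquot a ha, hquot b hb]
    have ha' : (0 : ℝ) < a := ha
    have hb' : (0 : ℝ) < b := hb
    exact hmonoP q p hq hp _ _ (by positivity) (by gcongr)
  · have hc1 : ContinuousAt (fun r => homPoly β c r ^ (1 / (n * β))) q :=
      (homPoly_continuousAt β c q hq).rpow_const (Or.inl (homPoly_pos β c hc hne q hq).ne')
    have hl : Tendsto (fun t : ℝ => q + t⁻¹ • p) atTop (𝓝 q) := by
      have := (tendsto_inv_atTop_zero (𝕜 := ℝ)).smul_const p |>.const_add q
      simpa using this
    refine (hc1.tendsto.comp hl).congr' ?_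
    filter_upwards [eventually_gt_atTop 0] with t ht
    simp only [Function.comp]
    rw [hquot t ht]
  · intro a ha b hb hab
    exact hmonoP p q hp hq _ _ (le_of_lt ha) hab

open Filter Topology in
theorem hom_superadd {n : ℕ} (hn : n ≠ 0) (β : ℝ) (hβ : 0 < β) (c : Finset (Fin n) → ℝ)
    (hc : ∀ S, 0 ≤ c S) (hne : ∃ S, c S ≠ 0)
    (hstab : expStable (β * Real.pi) c Finset.univ)
    (p q : (Fin n → ℝ) × (Fin n → ℝ)) (hp : posPair p) (hq : posPair q) :
    homPoly β c p ^ (1 / (n * β)) + homPoly β c q ^ (1 / (n * β)) ≤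
      homPoly β c (p + q) ^ (1 / (n * β)) := by
  have hev : ∀ᶠ ε : ℝ in 𝓝[>] 0, posPair (p - ε • q) := by
    apply nhdsWithin_le_nhds
    have h1 : ∀ᶠ ε : ℝ in 𝓝 0, ∀ i, 0 < (p - ε • q).1 i := by
      rw [eventually_all]
      intro i
      have : ContinuousAt (fun ε : ℝ => (p - ε • q).1 i) 0 := by
        simp only [Prod.fst_sub, Prod.smul_fst, Pi.sub_apply, Pi.smul_apply, smul_eq_mul]
        fun_prop
      exact this.eventually_const_lt (by simpa using hp.1 i)
    have h2 : ∀ᶠ ε : ℝ in 𝓝 0, ∀ i, 0 < (p - ε • q).2 i := by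
      rw [eventually_all]
      intro i
      have : ContinuousAt (fun ε : ℝ => (p - ε • q).2 i) 0 := by
        simp only [Prod.snd_sub, Prod.smul_snd, Pi.sub_apply, Pi.smul_apply, smul_eq_mul]
        fun_prop
      exact this.eventually_const_lt (by simpa using hp.2 i)
    exact h1.and h2
  obtain ⟨ε, hε, hε0⟩ := (hev.and self_mem_nhdsWithin).exists
  have hε1 : (0 : ℝ) < ε := hε0
  have := hom_growth hn β hβ c hc hne hstab (p - ε • q) q hε hq ε (1 + ε) hε1 (by linarith)
  have e1 : p - ε • q + (1 + ε) • q = p + q := by rw [add_smul, one_smul]; abel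
  have e2 : p - ε • q + ε • q = p := by abel
  rw [e1, e2] at this
  linarith

theorem expStable_of_sector {n : ℕ} (α : ℝ) (hα : α ≤ 1) (c : Finset (Fin n) → ℝ)
    (hstable : ∀ z : Fin n → ℂ, (∀ i, inSector α (z i)) →
      (∑ S : Finset (Fin n), (c S : ℂ) * ∏ i ∈ S, z i) ≠ 0) :
    expStable (α / 2 * Real.pi) c Finset.univ := by
  intro s hs
  have := hstable (fun i => Complex.exp (s i)) (fun i => by
    refine ⟨Complex.exp_ne_zero _, ?_⟩
    have h1 := hs i
    have h2 : α / 2 * Real.pi ≤ Real.pi / 2 := by nlinarith [Real.pi_pos]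
    have h3 := abs_lt.1 h1
    have harg : (Complex.exp (s i)).arg = (s i).im := by
      rw [Complex.arg_exp, toIocMod_eq_self]
      constructor <;> linarith [Real.pi_pos]
    rw [harg]
    linarith)
  simpa [expSum, Complex.exp_sum] using this

theorem homogenization_fractionally_log_concave (n : ℕ) (α : ℝ)
    (hα0 : 0 < α) (hα : α ≤ 1)
    (c : Finset (Fin n) → ℝ) (hc : ∀ S, 0 ≤ c S) (hne : ∃ S, c S ≠ 0)
    (hstable : ∀ z : Fin n → ℂ, (∀ i, inSector α (z i)) →
      (∑ S : Finset (Fin n), (c S : ℂ) * ∏ i ∈ S, z i) ≠ 0) :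
    ConcaveOn ℝ {xw : (Fin n → ℝ) × (Fin n → ℝ) | (∀ i, 0 < xw.1 i) ∧ (∀ i, 0 < xw.2 i)}
      (fun xw => Real.log (∑ S : Finset (Fin n),
        c S * ((∏ i ∈ S, xw.1 i ^ (α / 2)) * ∏ i ∈ Sᶜ, xw.2 i ^ (α / 2)))) := by
  have hβ : 0 < α / 2 := by positivity
  change ConcaveOn ℝ {xw : (Fin n → ℝ) × (Fin n → ℝ) | posPair xw}
    (fun xw => Real.log (homPoly (α / 2) c xw))
  have hsm : ∀ (r : ℝ) (p : (Fin n → ℝ) × (Fin n → ℝ)), 0 < r → posPair p → posPair (r • p) :=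
    fun r p hr hp => ⟨fun i => by simpa using mul_pos hr (hp.1 i),
      fun i => by simpa using mul_pos hr (hp.2 i)⟩
  rw [concaveOn_iff_forall_pos]
  constructor
  · rw [convex_iff_forall_pos]
    intro p hp q hq a b ha hb _
    exact posPair_add_smul _ _ (hsm a p ha hp) hq b hb.le
  intro p hp q hq a b ha hb hab
  have hp' : posPair p := hp
  have hq' : posPair q := hq
  simp only [smul_eq_mul]
  rcases Nat.eq_zero_or_pos n with rfl | hn
  · have e : ∀ r : (Fin 0 → ℝ) × (Fin 0 → ℝ), r = p := fun r => Subsingleton.elim _ _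
    rw [e q, e (a • p + b • p), ← add_mul, hab, one_mul]
  have hn' : (0 : ℝ) < n := by exact_mod_cast hn
  have hnβ : 0 < n * (α / 2) := by positivity
  have hstab := expStable_of_sector α hα c hstable
  have hpp := homPoly_pos (α / 2) c hc hne
  have hsup := hom_superadd hn.ne' (α / 2) hβ c hc hne hstab (a • p) (b • q)
    (hsm a p ha hp) (hsm b q hb hq)
  have hhom : ∀ (r : ℝ) (p : (Fin n → ℝ) × (Fin n → ℝ)), 0 < r → posPair p →
      homPoly (α / 2) c (r • p) ^ (1 / (n * (α / 2)))
        = r * homPoly (α / 2) c p ^ (1 / (n * (α / 2))) := by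
    intro r p hr hp
    rw [homPoly_smul _ c r hr p hp, Real.mul_rpow (by positivity) (hpp p hp).le,
      ← Real.rpow_mul hr.le, mul_one_div_cancel hnβ.ne', Real.rpow_one]
  rw [hhom a p ha hp, hhom b q hb hq] at hsup
  have hHp : 0 < homPoly (α / 2) c p ^ (1 / (n * (α / 2))) := Real.rpow_pos_of_pos (hpp p hp) _
  have hHq : 0 < homPoly (α / 2) c q ^ (1 / (n * (α / 2))) := Real.rpow_pos_of_pos (hpp q hq) _
  have hlog := strictConcaveOn_log_Ioi.concaveOn.2 (Set.mem_Ioi.2 hHp) (Set.mem_Ioi.2 hHq)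
    ha.le hb.le hab
  simp only [smul_eq_mul] at hlog
  have hlog2 := Real.log_le_log (by positivity) hsup
  have hsum : posPair (a • p + b • q) := posPair_add_smul _ _ (hsm a p ha hp) hq b hb.le
  rw [Real.log_rpow (hpp _ hsum)] at hlog2
  rw [Real.log_rpow (hpp p hp), Real.log_rpow (hpp q hq)] at hlog
  have hfin := hlog.trans hlog2
  have h3 := mul_le_mul_of_nonneg_left hfin hnβ.le
  field_simp at h3
  linarith
end

section
/- Let α ∈ (0,1] and let μ be a probability distribution on subsets of [n] whose generating polynomial g_μ(z₁,…,zₙ) = Σ_{S⊆[n]} μ(S) Π_{i∈S} z_i is α-fractionally log-concave. Let μ(i) = Pr_{S∼μ}[i ∈ S] be the marginal probabilities. Then the entropy satisfies H(μ) ≥ α · Σ_{i=1}^{n} μ(i) log(1/μ(i)), with the convention 0·log(1/0) = 0. -/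
open Finset

/-- If the generating polynomial of the probability distribution `μ` on subsets of `[n]`
is `α`-fractionally log-concave, then the entropy of `μ` is at least `α` times the sum
of the marginal "entropies" `μ(i) log(1/μ(i))`. -/
theorem entropy_lower_bound_of_fractionally_log_concave (n : ℕ) (α : ℝ)
    (hα0 : 0 < α) (hα1 : α ≤ 1)
    (μ : Finset (Fin n) → ℝ) (hμ0 : ∀ S, 0 ≤ μ S)
    (hμ1 : ∑ S : Finset (Fin n), μ S = 1)
    (hflc : ConcaveOn ℝ {x : Fin n → ℝ | ∀ i, 0 < x i}
      (fun x => Real.log (∑ S : Finset (Fin n), μ S * ∏ i ∈ S, x i ^ α))) :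
    (∑ S : Finset (Fin n), μ S * Real.log (1 / μ S)) ≥
      α * ∑ i : Fin n,
        (∑ S ∈ univ.filter (fun S : Finset (Fin n) => i ∈ S), μ S) *
          Real.log (1 / ∑ S ∈ univ.filter (fun S : Finset (Fin n) => i ∈ S), μ S) := by
  set m : Fin n → ℝ := fun i => ∑ S ∈ univ.filter (fun S : Finset (Fin n) => i ∈ S), μ S with hm
  have hm0 : ∀ i, 0 ≤ m i := fun i => Finset.sum_nonneg (fun S _ => hμ0 S)
  change _ ≥ α * ∑ i : Fin n, m i * Real.log (1 / m i)
  have hswap : ∀ c : Fin n → ℝ, ∑ S : Finset (Fin n), μ S * ∑ i ∈ S, c i = ∑ i, m i * c i := by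
    intro c
    have h1 : ∀ S : Finset (Fin n), μ S * ∑ i ∈ S, c i
        = ∑ i, if i ∈ S then μ S * c i else 0 := by
      intro S
      rw [Finset.mul_sum, Finset.sum_ite_mem, Finset.univ_inter]
    simp_rw [h1]
    rw [Finset.sum_comm]
    refine Finset.sum_congr rfl fun i _ => ?_
    rw [hm, Finset.sum_mul, Finset.sum_filter]
  have key : ∀ ε : ℝ, 0 < ε →
      α * ∑ i : Fin n, m i * Real.log (1 / (m i + ε)) ≤
        ∑ S : Finset (Fin n), μ S * Real.log (1 / μ S) := by
    intro ε hε
    have hd : ∀ i, 0 < m i + ε := fun i => by linarith [hm0 i]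
    let p : Finset (Fin n) → Fin n → ℝ := fun S i => ((if i ∈ S then 1 else 0) + ε) / (m i + ε)
    have hp : ∀ S i, 0 < p S i := by
      intro S i
      refine div_pos ?_ (hd i)
      split_ifs <;> linarith
    have hJ := hflc.le_map_sum (t := univ) (w := μ) (p := p) (fun S _ => hμ0 S) hμ1
      (fun S _ => hp S)
    have hmean : ∑ S : Finset (Fin n), μ S • p S = fun _ => 1 := by
      funext i
      simp only [Finset.sum_apply, Pi.smul_apply, smul_eq_mul, p]
      have : ∀ S : Finset (Fin n), μ S * (((if i ∈ S then 1 else 0) + ε) / (m i + ε))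
          = ((if i ∈ S then μ S else 0) + μ S * ε) / (m i + ε) := by
        intro S
        split_ifs <;> ring
      simp_rw [this]
      rw [← Finset.sum_div, Finset.sum_add_distrib, ← Finset.sum_mul, hμ1, one_mul,
        ← Finset.sum_filter]
      exact div_self (hd i).ne'
    rw [hmean] at hJ
    simp only [Real.one_rpow, Finset.prod_const_one, mul_one, hμ1, Real.log_one, smul_eq_mul] at hJ
    have hterm : ∀ S : Finset (Fin n),
        -(μ S * Real.log (1 / μ S)) + α * (μ S * ∑ i ∈ S, Real.log (1 / (m i + ε))) ≤
        μ S * Real.log (∑ T : Finset (Fin n), μ T * ∏ i ∈ T, p S i ^ α) := by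
      intro S
      rcases (hμ0 S).eq_or_lt with h | h
      · simp [← h]
      have hq : ∀ i, 0 < 1 / (m i + ε) := fun i => one_div_pos.mpr (hd i)
      have hprod : 0 < ∏ i ∈ S, (1 / (m i + ε)) ^ α :=
        Finset.prod_pos fun i _ => Real.rpow_pos_of_pos (hq i) _
      have h1 : μ S * ∏ i ∈ S, (1 / (m i + ε)) ^ α ≤
          ∑ T : Finset (Fin n), μ T * ∏ i ∈ T, p S i ^ α := by
        calc _ ≤ μ S * ∏ i ∈ S, p S i ^ α := by
              refine mul_le_mul_of_nonneg_left ?_ h.le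
              refine Finset.prod_le_prod (fun i _ => (Real.rpow_pos_of_pos (hq i) _).le) ?_
              intro i hi
              refine Real.rpow_le_rpow (hq i).le ?_ hα0.le
              simp only [p, hi, if_true]
              exact div_le_div_of_nonneg_right (by linarith) (hd i).le
          _ ≤ _ := Finset.single_le_sum (f := fun T => μ T * ∏ i ∈ T, p S i ^ α)
              (fun T _ => mul_nonneg (hμ0 T)
                (Finset.prod_nonneg fun i _ => Real.rpow_nonneg (hp S i).le _)) (Finset.mem_univ S)
      have h2 := Real.log_le_log (mul_pos h hprod) h1
      rw [Real.log_mul h.ne' hprod.ne',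
        Real.log_prod (fun i _ => (Real.rpow_pos_of_pos (hq i) _).ne')] at h2
      simp_rw [fun i => Real.log_rpow (hq i) α] at h2
      rw [← Finset.mul_sum] at h2
      have h3 := mul_le_mul_of_nonneg_left h2 h.le
      have h4 : Real.log (1 / μ S) = - Real.log (μ S) := by rw [one_div, Real.log_inv]
      rw [h4]
      linarith
    have hs := (Finset.sum_le_sum fun S (_ : S ∈ univ) => hterm S).trans hJ
    rw [Finset.sum_add_distrib, Finset.sum_neg_distrib, ← Finset.mul_sum, hswap] at hs
    linarith
  have hlim : Filter.Tendsto (fun ε : ℝ => α * ∑ i : Fin n, m i * Real.log (1 / (m i + ε)))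
      (nhdsWithin 0 (Set.Ioi 0)) (nhds (α * ∑ i : Fin n, m i * Real.log (1 / m i))) := by
    refine Filter.Tendsto.const_mul _ (tendsto_finsetSum _ fun i _ => ?_)
    rcases (hm0 i).eq_or_lt with h | h
    · simp [← h]
    · have hc : ContinuousAt (fun ε : ℝ => m i * Real.log (1 / (m i + ε))) 0 := by
        have h0 : m i + 0 ≠ 0 := by linarith
        have h1 : ContinuousAt (fun ε : ℝ => m i + ε) 0 := by fun_prop
        exact continuousAt_const.mul
          ((continuousAt_const.div h1 h0).log (one_div_ne_zero h0))
      have := hc.tendsto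
      simp only [add_zero] at this
      exact this.mono_left nhdsWithin_le_nhds
  refine le_of_tendsto hlim ?_
  filter_upwards [self_mem_nhdsWithin] with ε hε
  exact key ε hε
end

section
/- Let α ∈ (0,1] and let μ be a probability distribution on subsets of [n] such that both the generating polynomial of μ and the generating polynomial of its dual μ* (defined by μ*(S) = μ([n]∖S)) are α-fractionally log-concave. Then (α/2) · Σ_{i=1}^{n} H_b(μ(i)) ≤ H(μ) ≤ Σ_{i=1}^{n} H_b(μ(i)), where μ(i) = Pr_{S∼μ}[i ∈ S] and H_b(p) = p log(1/p) + (1−p) log(1/(1−p)) is the binary entropy, with 0·log(1/0) = 0. -/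
open Finset

/-- One-sided entropy bound, perturbed version. -/
lemma flc_entropy_eps (n : ℕ) (α : ℝ) (hα0 : 0 < α)
    (ν : Finset (Fin n) → ℝ) (h0 : ∀ S, 0 ≤ ν S) (h1 : ∑ S : Finset (Fin n), ν S = 1)
    (hc : ConcaveOn ℝ {x : Fin n → ℝ | ∀ i, 0 < x i}
      (fun x => Real.log (∑ S : Finset (Fin n), ν S * ∏ i ∈ S, x i ^ α)))
    (p : Fin n → ℝ) (hp : ∀ i, p i = ∑ S ∈ univ.filter (fun S : Finset (Fin n) => i ∈ S), ν S)
    (ε : ℝ) (hε : 0 < ε) :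
    α * ∑ i, p i * Real.log (1 / (p i + ε)) ≤ ∑ S : Finset (Fin n), ν S * Real.log (1 / ν S) := by
  have hp0 : ∀ i, 0 ≤ p i := fun i => by rw [hp]; exact sum_nonneg fun S _ => h0 S
  have hpe : ∀ i, 0 < p i + ε := fun i => by linarith [hp0 i]
  let z : Finset (Fin n) → Fin n → ℝ := fun S i => ((if i ∈ S then 1 else 0) + ε) / (p i + ε)
  have hz : ∀ S i, 0 < z S i := by
    intro S i
    apply div_pos _ (hpe i)
    split_ifs <;> linarith
  have J := hc.le_map_sum (t := univ) (w := ν) (p := z) (fun S _ => h0 S) h1 (fun S _ => hz S)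
  have hmean : (∑ S, ν S • z S) = fun _ => 1 := by
    funext i
    simp only [Finset.sum_apply, Pi.smul_apply, smul_eq_mul, z]
    have : ∀ S : Finset (Fin n), ν S * (((if i ∈ S then 1 else 0) + ε) / (p i + ε))
        = ((if i ∈ S then ν S else 0) + ν S * ε) / (p i + ε) := by
      intro S; split_ifs <;> ring
    simp only [this]
    rw [← sum_div, sum_add_distrib, ← sum_mul, h1, ← sum_filter, ← hp, one_mul]
    exact div_self (hpe i).ne'
  rw [hmean] at J
  simp only [Real.one_rpow, prod_const_one, mul_one, h1, Real.log_one, smul_eq_mul] at J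
  have key : ∀ S, ν S * (Real.log (ν S) + α * ∑ i ∈ S, Real.log (1 / (p i + ε))) ≤
      ν S * Real.log (∑ T : Finset (Fin n), ν T * ∏ i ∈ T, z S i ^ α) := by
    intro S
    rcases (h0 S).eq_or_lt with h | h
    · rw [← h]; simp
    apply mul_le_mul_of_nonneg_left _ h.le
    have hq : ∀ i, 0 < (1 / (p i + ε)) := fun i => one_div_pos.2 (hpe i)
    have e : Real.log (ν S) + α * ∑ i ∈ S, Real.log (1 / (p i + ε)) =
        Real.log (ν S * ∏ i ∈ S, (1 / (p i + ε)) ^ α) := by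
      rw [Real.log_mul h.ne' (prod_pos fun i _ => Real.rpow_pos_of_pos (hq i) α).ne',
        Real.log_prod (fun i _ => (Real.rpow_pos_of_pos (hq i) α).ne'), mul_sum]
      congr 1
      exact sum_congr rfl fun i _ => (Real.log_rpow (hq i) α).symm
    rw [e]
    apply Real.log_le_log (mul_pos h (prod_pos fun i _ => Real.rpow_pos_of_pos (hq i) α))
    refine le_trans ?_ (single_le_sum (f := fun T : Finset (Fin n) => ν T * ∏ i ∈ T, z S i ^ α)
      (fun T _ => mul_nonneg (h0 T)
        (prod_nonneg fun i _ => (Real.rpow_pos_of_pos (hz S i) α).le)) (mem_univ S))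
    apply mul_le_mul_of_nonneg_left _ h.le
    apply prod_le_prod (fun i _ => (Real.rpow_pos_of_pos (hq i) α).le)
    intro i hi
    apply Real.rpow_le_rpow (hq i).le _ hα0.le
    simp only [z, hi, if_true]
    exact div_le_div_of_nonneg_right (by linarith) (hpe i).le
  have K := (sum_le_sum fun S (_ : S ∈ univ) => key S).trans J
  have swap : ∑ S, ν S * (α * ∑ i ∈ S, Real.log (1 / (p i + ε))) =
      α * ∑ i, p i * Real.log (1 / (p i + ε)) := by
    change ∑ S, ν S * (α * ∑ i ∈ S, (fun i => Real.log (1 / (p i + ε))) i) =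
      α * ∑ i, p i * (fun i => Real.log (1 / (p i + ε))) i
    generalize (fun i => Real.log (1 / (p i + ε))) = L
    have a : ∀ i, p i * L i = ∑ S : Finset (Fin n), if i ∈ S then ν S * L i else 0 := by
      intro i
      rw [hp, sum_mul, sum_filter]
    simp only [a]
    rw [sum_comm, mul_sum]
    apply sum_congr rfl
    intro S _
    rw [← sum_filter, filter_mem_eq_inter, univ_inter, ← mul_sum]
    ring
  simp only [mul_add, sum_add_distrib] at K
  rw [swap] at K
  have e2 : ∑ S : Finset (Fin n), ν S * Real.log (1 / ν S) = - ∑ S, ν S * Real.log (ν S) := by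
    rw [← sum_neg_distrib]
    exact sum_congr rfl fun S _ => by rw [one_div, Real.log_inv]; ring
  rw [e2]; linarith

/-- One-sided entropy bound. -/
lemma flc_entropy (n : ℕ) (α : ℝ) (hα0 : 0 < α)
    (ν : Finset (Fin n) → ℝ) (h0 : ∀ S, 0 ≤ ν S) (h1 : ∑ S : Finset (Fin n), ν S = 1)
    (hc : ConcaveOn ℝ {x : Fin n → ℝ | ∀ i, 0 < x i}
      (fun x => Real.log (∑ S : Finset (Fin n), ν S * ∏ i ∈ S, x i ^ α)))
    (p : Fin n → ℝ) (hp : ∀ i, p i = ∑ S ∈ univ.filter (fun S : Finset (Fin n) => i ∈ S), ν S) :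
    α * ∑ i, p i * Real.log (1 / p i) ≤ ∑ S : Finset (Fin n), ν S * Real.log (1 / ν S) := by
  have T : Filter.Tendsto (fun ε : ℝ => α * ∑ i, p i * Real.log (1 / (p i + ε)))
      (nhdsWithin 0 (Set.Ioi 0)) (nhds (α * ∑ i, p i * Real.log (1 / p i))) := by
    apply Filter.Tendsto.const_mul
    apply tendsto_finsetSum
    intro i _
    by_cases h : p i = 0
    · simp [h]
    apply Filter.Tendsto.const_mul
    have : ContinuousAt (fun ε : ℝ => Real.log (1 / (p i + ε))) 0 := by
      apply ContinuousAt.log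
      · apply ContinuousAt.div continuousAt_const (by fun_prop) (by simpa using h)
      · simpa using h
    have := this.tendsto
    simp only [add_zero] at this
    exact this.mono_left nhdsWithin_le_nhds
  apply le_of_tendsto T
  filter_upwards [self_mem_nhdsWithin] with ε hε
  exact flc_entropy_eps n α hα0 ν h0 h1 hc p hp ε hε

/-- Subadditivity of entropy. -/
lemma entropy_subadd (n : ℕ)
    (μ : Finset (Fin n) → ℝ) (h0 : ∀ S, 0 ≤ μ S) (h1 : ∑ S : Finset (Fin n), μ S = 1)
    (p q : Fin n → ℝ)
    (hp : ∀ i, p i = ∑ S ∈ univ.filter (fun S : Finset (Fin n) => i ∈ S), μ S)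
    (hq : ∀ i, q i = ∑ S ∈ univ.filter (fun S : Finset (Fin n) => i ∉ S), μ S) :
    ∑ S : Finset (Fin n), μ S * Real.log (1 / μ S) ≤
      ∑ i, (p i * Real.log (1 / p i) + q i * Real.log (1 / q i)) := by
  have hpq : ∀ i, p i + q i = 1 := fun i => by
    rw [hp, hq, sum_filter_add_sum_filter_not, h1]
  have hp0 : ∀ i, 0 ≤ p i := fun i => by rw [hp]; exact sum_nonneg fun S _ => h0 S
  have hq0 : ∀ i, 0 ≤ q i := fun i => by rw [hq]; exact sum_nonneg fun S _ => h0 S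
  have hsum : ∑ S : Finset (Fin n), (∏ i ∈ S, p i) * ∏ i ∈ Sᶜ, q i = 1 := by
    have := Finset.prod_add p q univ
    simp only [hpq, prod_const_one, powerset_univ] at this
    rw [this]
    exact sum_congr rfl fun S _ => by rw [compl_eq_univ_sdiff]
  have key : ∀ S, μ S * Real.log (1 / μ S) -
      μ S * (∑ i ∈ S, Real.log (1 / p i) + ∑ i ∈ Sᶜ, Real.log (1 / q i)) ≤
      (∏ i ∈ S, p i) * (∏ i ∈ Sᶜ, q i) - μ S := by
    intro S
    rcases (h0 S).eq_or_lt with h | h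
    · rw [← h]; simp only [zero_mul, sub_zero]
      exact mul_nonneg (prod_nonneg fun i _ => hp0 i) (prod_nonneg fun i _ => hq0 i)
    have hpp : ∀ i ∈ S, 0 < p i := fun i hi => by
      rw [hp]
      exact h.trans_le (single_le_sum (f := μ) (fun T _ => h0 T) (by simp [hi]))
    have hqq : ∀ i ∈ Sᶜ, 0 < q i := fun i hi => by
      rw [hq]
      exact h.trans_le (single_le_sum (f := μ) (fun T _ => h0 T) (by simpa using hi))
    have hP := prod_pos hpp
    have hQ := prod_pos hqq
    have L := Real.log_le_sub_one_of_pos (div_pos (mul_pos hP hQ) h)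
    have L2 := mul_le_mul_of_nonneg_left L h.le
    rw [Real.log_div (mul_pos hP hQ).ne' h.ne', Real.log_mul hP.ne' hQ.ne',
      Real.log_prod (fun i hi => (hpp i hi).ne'), Real.log_prod (fun i hi => (hqq i hi).ne'),
      mul_sub (μ S) (_ / _), mul_div_cancel₀ _ h.ne'] at L2
    simp only [one_div, Real.log_inv, sum_neg_distrib]
    linarith
  have K := sum_le_sum fun S (_ : S ∈ univ) => key S
  rw [sum_sub_distrib, sum_sub_distrib, hsum, h1] at K
  have swap : ∑ S, μ S * (∑ i ∈ S, Real.log (1 / p i) + ∑ i ∈ Sᶜ, Real.log (1 / q i)) =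
      ∑ i, (p i * Real.log (1 / p i) + q i * Real.log (1 / q i)) := by
    have a : ∀ S : Finset (Fin n), ∑ i ∈ S, Real.log (1 / p i) + ∑ i ∈ Sᶜ, Real.log (1 / q i) =
        ∑ i, if i ∈ S then Real.log (1 / p i) else Real.log (1 / q i) := by
      intro S
      rw [← sum_add_sum_compl S]
      congr 1
      · exact sum_congr rfl fun i hi => by simp [hi]
      · exact sum_congr rfl fun i hi => by simp [mem_compl.1 hi]
    simp only [a, mul_sum]
    rw [sum_comm]
    apply sum_congr rfl
    intro i _
    generalize Real.log (1 / p i) = A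
    generalize Real.log (1 / q i) = B
    rw [hp, hq, sum_mul, sum_mul, sum_filter, sum_filter, ← sum_add_distrib]
    apply sum_congr rfl
    intro S _
    by_cases h : i ∈ S <;> simp [h]
  linarith

/-- If both the generating polynomial of `μ` and that of its dual `μ*(S) = μ([n]∖S)`
are `α`-fractionally log-concave, then the sum of the binary entropies of the marginals
approximates the entropy of `μ` within a factor `α/2`. -/
theorem entropy_two_sided_bound_of_fractionally_log_concave (n : ℕ) (α : ℝ)
    (hα0 : 0 < α) (hα1 : α ≤ 1)
    (μ : Finset (Fin n) → ℝ) (hμ0 : ∀ S, 0 ≤ μ S)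
    (hμ1 : ∑ S : Finset (Fin n), μ S = 1)
    (hflc : ConcaveOn ℝ {x : Fin n → ℝ | ∀ i, 0 < x i}
      (fun x => Real.log (∑ S : Finset (Fin n), μ S * ∏ i ∈ S, x i ^ α)))
    (hflcDual : ConcaveOn ℝ {x : Fin n → ℝ | ∀ i, 0 < x i}
      (fun x => Real.log (∑ S : Finset (Fin n), μ Sᶜ * ∏ i ∈ S, x i ^ α))) :
    (α / 2) * (∑ i : Fin n,
        ((∑ S ∈ univ.filter (fun S : Finset (Fin n) => i ∈ S), μ S) *
            Real.log (1 / ∑ S ∈ univ.filter (fun S : Finset (Fin n) => i ∈ S), μ S) +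
          (1 - ∑ S ∈ univ.filter (fun S : Finset (Fin n) => i ∈ S), μ S) *
            Real.log (1 / (1 - ∑ S ∈ univ.filter (fun S : Finset (Fin n) => i ∈ S), μ S))))
      ≤ ∑ S : Finset (Fin n), μ S * Real.log (1 / μ S) ∧
    (∑ S : Finset (Fin n), μ S * Real.log (1 / μ S)) ≤
      ∑ i : Fin n,
        ((∑ S ∈ univ.filter (fun S : Finset (Fin n) => i ∈ S), μ S) *
            Real.log (1 / ∑ S ∈ univ.filter (fun S : Finset (Fin n) => i ∈ S), μ S) +
          (1 - ∑ S ∈ univ.filter (fun S : Finset (Fin n) => i ∈ S), μ S) *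
            Real.log (1 / (1 - ∑ S ∈ univ.filter (fun S : Finset (Fin n) => i ∈ S), μ S))) := by

  have hq : ∀ i : Fin n, 1 - (∑ S ∈ univ.filter (fun S : Finset (Fin n) => i ∈ S), μ S) =
      ∑ S ∈ univ.filter (fun S : Finset (Fin n) => i ∉ S), μ S := fun i => by
    rw [← hμ1, ← sum_filter_add_sum_filter_not univ (fun S : Finset (Fin n) => i ∈ S)]
    ring
  have cs : ∀ f : Finset (Fin n) → ℝ, ∑ S, f Sᶜ = ∑ S, f S := fun f =>
    (compl_involutive (α := Finset (Fin n))).bijective.sum_comp f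
  refine ⟨?_, entropy_subadd n μ hμ0 hμ1 _ _ (fun _ => rfl) hq⟩
  have A := flc_entropy n α hα0 μ hμ0 hμ1 hflc _ (fun _ => rfl)
  have B := flc_entropy n α hα0 (fun S => μ Sᶜ) (fun S => hμ0 _) (by rw [cs, hμ1]) hflcDual
    (fun i => 1 - (∑ S ∈ univ.filter (fun S : Finset (Fin n) => i ∈ S), μ S)) (fun i => by
      rw [hq, sum_filter, sum_filter, ← cs]
      exact sum_congr rfl fun S _ => by simp)
  rw [cs (fun S => μ S * Real.log (1 / μ S))] at B
  rw [sum_add_distrib]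
  linarith
end

section
/- Let k ≥ 1 be an integer, let α, β ∈ ℤ_{≥0}^n with α ≠ β, and let a, b > 0 be positive reals. If the binomial g(z₁,…,zₙ) = a·z^α + b·z^β (where z^α = Π_i z_i^{α_i}) is Γ_{1/k}-stable, then Σ_{i=1}^{n} |α_i − β_i| ≤ 2k. Consequently, the edges of the Newton polytope of a Γ_{1/k}-stable distribution have ℓ₁-length at most 2k. -/
open Finset

/-- If the binomial `g(z) = a z^α + b z^β` (with `a, b > 0`, `α ≠ β`) is
`Γ_{1/k}`-stable, then `Σ_i |α_i − β_i| ≤ 2k`.  (Consequently, the edges of the Newton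
polytope of a `Γ_{1/k}`-stable distribution have `ℓ₁`-length at most `2k`.) -/
theorem binomial_sector_stable_exponent_bound (n k : ℕ) (hk : 1 ≤ k)
    (a b : ℝ) (ha : 0 < a) (hb : 0 < b)
    (α β : Fin n → ℕ) (hne : α ≠ β)
    (hstable : ∀ z : Fin n → ℂ, (∀ i, inSector (1 / (k : ℝ)) (z i)) →
      (a : ℂ) * (∏ i, z i ^ α i) + (b : ℂ) * (∏ i, z i ^ β i) ≠ 0) :
    (∑ i, ((α i : ℤ) - (β i : ℤ)).natAbs) ≤ 2 * k := by
  by_contra hS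
  push Not at hS
  obtain ⟨j, hj⟩ := Function.ne_iff.mp hne
  set S : ℕ := ∑ i, ((α i : ℤ) - (β i : ℤ)).natAbs with hSdef
  have hkR : (1 : ℝ) ≤ k := by exact_mod_cast hk
  have hSR : (2 : ℝ) * k < S := by exact_mod_cast hS
  have hS0 : (0 : ℝ) < S := by linarith
  have hpi := Real.pi_pos
  have hth : Real.pi / S < 1 / (k : ℝ) * Real.pi / 2 := by
    have h1 : 1 / (k : ℝ) * Real.pi / 2 = Real.pi / (2 * k) := by
      field_simp
    rw [h1]
    exact div_lt_div_of_pos_left hpi (by linarith) hSR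
  have hth2 : 1 / (k : ℝ) * Real.pi / 2 < Real.pi := by
    have h1 : 1 / (k : ℝ) ≤ 1 := by
      rw [div_le_one (by linarith)]; exact hkR
    nlinarith
  have hth0 : 0 < Real.pi / S := by positivity
  let d : Fin n → ℤ := fun i => (α i : ℤ) - (β i : ℤ)
  have hdj : (d j : ℝ) ≠ 0 := by
    have : d j ≠ 0 := by
      intro h
      apply hj
      have h2 : (α j : ℤ) - (β j : ℤ) = 0 := h
      omega
    exact_mod_cast this
  let x : Fin n → ℝ := fun i => if i = j then Real.log (b / a) / d j else 0
  let y : Fin n → ℝ := fun i => ((d i).sign : ℝ) * (Real.pi / S)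
  let w : Fin n → ℂ := fun i => (x i : ℂ) + (y i : ℂ) * Complex.I
  have hy : ∀ i, |y i| ≤ Real.pi / S := by
    intro i
    have h1 : |((d i).sign : ℝ)| ≤ 1 := by
      rcases Int.sign_trichotomy (d i) with h | h | h <;> simp [h]
    simp only [y]
    rw [abs_mul, abs_of_pos hth0]
    nlinarith
  have hsec : ∀ i, inSector (1 / (k : ℝ)) (Complex.exp (w i)) := by
    intro i
    refine ⟨Complex.exp_ne_zero _, ?_⟩
    have him : (w i).im = y i := by simp [w]
    have h1 := abs_le.mp (hy i)
    have h2 : (Complex.exp (w i)).arg = y i := by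
      rw [← Complex.log_im, Complex.log_exp (by rw [him]; linarith) (by rw [him]; linarith), him]
    rw [h2]
    exact lt_of_le_of_lt (hy i) hth
  apply hstable (fun i => Complex.exp (w i)) hsec
  have hprod : ∀ γ : Fin n → ℕ, (∏ i, Complex.exp (w i) ^ γ i)
      = Complex.exp (∑ i, (γ i : ℂ) * w i) := by
    intro γ
    rw [Complex.exp_sum]
    exact Finset.prod_congr rfl fun i _ => (Complex.exp_nat_mul _ _).symm
  have hx : ∑ i, (d i : ℝ) * x i = Real.log (b / a) := by
    simp only [x, mul_ite, mul_zero, Finset.sum_ite_eq', Finset.mem_univ, if_true]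
    field_simp
  have hy2 : ∑ i, (d i : ℝ) * y i = Real.pi := by
    have h1 : ∀ i, (d i : ℝ) * y i = ((d i).natAbs : ℝ) * (Real.pi / S) := by
      intro i
      have h2 : (((d i).natAbs : ℤ) : ℝ) = (d i : ℝ) * ((d i).sign : ℝ) := by
        rw [← Int.cast_mul, Int.mul_sign_self]
      simp only [y]
      rw [← mul_assoc, ← h2, Int.cast_natCast]
    have h3 : (∑ i, ((d i).natAbs : ℝ)) = S := by
      rw [hSdef]; push_cast; rfl
    simp_rw [h1]
    rw [← Finset.sum_mul, h3]
    field_simp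
  have hsum : ∑ i, (α i : ℂ) * w i = ∑ i, (β i : ℂ) * w i
      + ((Real.log (b / a) : ℝ) + Real.pi * Complex.I) := by
    rw [← hx, ← hy2]
    push_cast
    rw [Finset.sum_mul, ← Finset.sum_add_distrib, ← Finset.sum_add_distrib]
    refine Finset.sum_congr rfl fun i _ => ?_
    simp only [d, w]
    push_cast
    ring
  simp only [hprod]
  rw [hsum, Complex.exp_add, Complex.exp_add, Complex.exp_pi_mul_I, ← Complex.ofReal_exp,
    Real.exp_log (by positivity)]
  have ha' : (a : ℂ) ≠ 0 := by exact_mod_cast ha.ne'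
  push_cast
  field_simp
  ring
end

section
/- Let G = (V, E) be a finite graph on n vertices with edge weights w : E → ℝ_{≥0} and vertex weights λ : V → ℝ_{≥0}, and define the weight of a matching M as weight(M) = Π_{e∈M} w(e) · Π_{v not covered by M} λ(v). Then for every k ≥ 0, the polynomial g(z₁,…,zₙ) = Σ_{M a matching of G with |M| = k} weight(M) · Π_{v not covered by M} z_v is either identically zero or Γ_{1/2}-stable (i.e., sector-stable for a sector of aperture π/2). -/
open Finset
open scoped Classical

/-- `M` is a matching of `G`: a set of edges of `G` that are pairwise vertex-disjoint. -/
def IsMatching {n : ℕ} (G : SimpleGraph (Fin n)) (M : Finset (Sym2 (Fin n))) : Prop :=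
  (∀ e ∈ M, e ∈ G.edgeSet) ∧
    ∀ e ∈ M, ∀ f ∈ M, e ≠ f → ∀ v : Fin n, ¬(v ∈ e ∧ v ∈ f)

/-- The vertices not covered by the matching `M` (the monomers). -/
noncomputable def uncovered {n : ℕ} (M : Finset (Sym2 (Fin n))) : Finset (Fin n) :=
  Finset.univ.filter (fun v => ∀ e ∈ M, v ∉ e)

/-- `weight(M) = Π_{e ∈ M} w(e) · Π_{v not covered by M} λ(v)`. -/
noncomputable def matchingWeight {n : ℕ} (w : Sym2 (Fin n) → ℝ) (lam : Fin n → ℝ)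
    (M : Finset (Sym2 (Fin n))) : ℝ :=
  (∏ e ∈ M, w e) * ∏ v ∈ uncovered M, lam v

open Polynomial in
lemma coeff_ne_of_roots : ∀ (k : ℕ) (q : ℂ[X]), q ≠ 0 → k ≤ q.natDegree →
    (∀ t : ℂ, 0 ≤ t.re → q.eval t ≠ 0) → q.coeff k ≠ 0 := by
  intro k
  induction k with
  | zero =>
    intro q _ _ h
    rw [Polynomial.coeff_zero_eq_eval_zero]
    exact h 0 (by simp)
  | succ k ih =>
    intro q hq hk h
    have hd : q.derivative.natDegree = q.natDegree - 1 := Polynomial.natDegree_derivative q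
    have hd0 : q.derivative ≠ 0 := by
      intro h0
      have := Polynomial.derivative_eq_zero.1 h0
      omega
    have := ih q.derivative hd0 (by omega) (by
      intro t ht h0
      have hmem : t ∈ q.derivative.rootSet ℂ := by
        rw [Polynomial.mem_rootSet]
        exact ⟨hd0, by simpa using h0⟩
      have h1 := Polynomial.rootSet_derivative_subset_convexHull_rootSet (P := q)
        (by apply Polynomial.natDegree_pos_iff_degree_pos.1; omega) hmem
      have h2 : convexHull ℝ (q.rootSet ℂ) ⊆ {z : ℂ | z.re < 0} := by
        apply convexHull_min
        · intro z hz
          by_contra hc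
          simp only [Set.mem_ofPred_eq, not_lt] at hc
          rw [Polynomial.mem_rootSet] at hz
          exact h z hc (by simpa using hz.2)
        · exact convex_halfSpace_re_lt 0
      have h3 : t.re < 0 := h2 h1
      linarith)
    rw [Polynomial.coeff_derivative] at this
    exact left_ne_zero_of_mul this

lemma multiset_bound (r : ℝ) (hr : 0 < r) (s : Multiset ℂ) (hs : ∀ a ∈ s, r ≤ ‖1 - a‖) :
    ‖(s.map (fun a => 0 - a)).prod‖ ≤ (1 + 1 / r) ^ s.card * ‖(s.map (fun a => 1 - a)).prod‖ := by
  induction s using Multiset.induction with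
  | empty => simp
  | cons a s ih =>
    have h1 := ih (fun b hb => hs b (Multiset.mem_cons_of_mem hb))
    have h2 := hs a (Multiset.mem_cons_self a s)
    have h3 : ‖0 - a‖ ≤ (1 + 1 / r) * ‖1 - a‖ := by
      have e : ‖0 - a‖ ≤ ‖1 - a‖ + 1 := by
        calc ‖0 - a‖ = ‖(1 - a) - 1‖ := by congr 1; ring
          _ ≤ _ := by simpa using norm_sub_le (1 - a) 1
      have : 1 ≤ 1 / r * ‖1 - a‖ := by
        rw [one_div, ← div_eq_inv_mul, le_div_iff₀ hr]; simpa using h2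
      linarith
    simp only [Multiset.map_cons, Multiset.prod_cons, norm_mul, Multiset.card_cons, pow_succ]
    calc _ ≤ ((1 + 1 / r) * ‖1 - a‖) * ((1 + 1 / r) ^ s.card * ‖(s.map (fun a => 1 - a)).prod‖) := by
          gcongr
      _ = _ := by ring

open Polynomial in
lemma poly_bound (P : ℂ[X]) (n : ℕ) (hn : P.natDegree ≤ n) (r : ℝ) (hr : 0 < r)
    (h : ∀ a : ℂ, ‖1 - a‖ < r → P.eval a ≠ 0) :
    ‖P.eval 0‖ ≤ (1 + 1 / r) ^ n * ‖P.eval 1‖ := by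
  by_cases hP : P = 0
  · simp [hP]
  have hs := IsAlgClosed.splits P
  have e := hs.eq_prod_roots
  have ev : ∀ x : ℂ, P.eval x = P.leadingCoeff * (P.roots.map (fun a => x - a)).prod := by
    intro x
    conv_lhs => rw [e]
    simp [Polynomial.eval_multiset_prod, Multiset.map_map]
  rw [ev 0, ev 1, norm_mul, norm_mul]
  have hb := multiset_bound r hr P.roots (by
    intro a ha
    by_contra hc
    exact h a (not_le.1 hc) (Polynomial.isRoot_of_mem_roots ha))
  have hc : P.roots.card ≤ n := (Polynomial.card_roots' P).trans hn
  calc _ ≤ ‖P.leadingCoeff‖ * ((1 + 1 / r) ^ n * ‖(P.roots.map (fun a => 1 - a)).prod‖) := by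
        refine mul_le_mul_of_nonneg_left (hb.trans ?_) (norm_nonneg _)
        refine mul_le_mul_of_nonneg_right (pow_le_pow_right₀ ?_ hc) (norm_nonneg _)
        have : 0 < 1 / r := by positivity
        linarith
    _ = _ := by ring

lemma hurwitz {n : ℕ} {ι : Type*} (s : Finset ι) (σ : ι → Finset (Fin n))
    (c : ℕ → ι → ℂ) (c' : ι → ℂ)
    (hc : ∀ i ∈ s, Filter.Tendsto (fun m => c m i) Filter.atTop (nhds (c' i)))
    (U : Set (Fin n → ℂ)) (hU : IsOpen U)
    (hne : ∀ m, ∀ z ∈ U, ∑ i ∈ s, c m i * ∏ v ∈ σ i, z v ≠ 0)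
    (z0 : Fin n → ℂ) (h0 : ∑ i ∈ s, c' i * ∏ v ∈ σ i, z0 v ≠ 0)
    (z : Fin n → ℂ) (hz : z ∈ U) : ∑ i ∈ s, c' i * ∏ v ∈ σ i, z v ≠ 0 := by
  let P : ℕ → Polynomial ℂ := fun m => ∑ i ∈ s, Polynomial.C (c m i) *
    ∏ v ∈ σ i, (Polynomial.C (z v - z0 v) * Polynomial.X + Polynomial.C (z0 v))
  have hdeg : ∀ m, (P m).natDegree ≤ n := by
    intro m
    apply Polynomial.natDegree_sum_le_of_forall_le
    intro i _
    refine (Polynomial.natDegree_C_mul_le _ _).trans ?_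
    refine (Polynomial.natDegree_prod_le _ _).trans ?_
    calc _ ≤ ∑ v ∈ σ i, 1 := Finset.sum_le_sum (fun v _ => Polynomial.natDegree_linear_le)
      _ ≤ n := by simpa using Finset.card_le_univ (σ i)
  have hev : ∀ m a, (P m).eval a = ∑ i ∈ s, c m i * ∏ v ∈ σ i, ((z v - z0 v) * a + z0 v) := by
    intro m a
    simp [P, Polynomial.eval_finsetSum, Polynomial.eval_prod]
  have hcont : Continuous (fun a : ℂ => (fun v => (z v - z0 v) * a + z0 v : Fin n → ℂ)) := by
    fun_prop
  have hopen := hU.preimage hcont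
  obtain ⟨r, hr, hball⟩ := Metric.isOpen_iff.1 hopen 1 (by simpa using hz)
  have hb : ∀ m, ‖(P m).eval 0‖ ≤ (1 + 1 / r) ^ n * ‖(P m).eval 1‖ := by
    intro m
    apply poly_bound _ _ (hdeg m) r hr
    intro a ha
    rw [hev]
    apply hne m
    exact hball (by rw [Metric.mem_ball, dist_comm, dist_eq_norm]; exact ha)
  have hlim : ∀ x : Fin n → ℂ, Filter.Tendsto (fun m => ∑ i ∈ s, c m i * ∏ v ∈ σ i, x v)
      Filter.atTop (nhds (∑ i ∈ s, c' i * ∏ v ∈ σ i, x v)) := by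
    intro x
    exact tendsto_finsetSum _ (fun i hi => (hc i hi).mul_const _)
  have hle := le_of_tendsto_of_tendsto' (hlim z0).norm ((hlim z).norm.const_mul ((1 + 1 / r) ^ n))
    (by intro m; simpa [hev] using hb m)
  intro hzero
  rw [hzero] at hle
  simp at hle
  exact h0 hle

lemma sector_of {z : ℂ} (h : inSector (1 / 2) z) : |z.im| < z.re := by
  obtain ⟨h0, h1⟩ := h
  have hp : 0 < ‖z‖ := norm_pos_iff.2 h0
  have hpi := Real.pi_pos
  have e1 : z.re = ‖z‖ * Real.cos z.arg := (Complex.norm_mul_cos_arg z).symm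
  have e2 : z.im = ‖z‖ * Real.sin z.arg := (Complex.norm_mul_sin_arg z).symm
  have h1' : |z.arg| < Real.pi / 4 := by linarith
  rw [e1, e2, abs_mul, abs_of_pos hp]
  apply mul_lt_mul_of_pos_left _ hp
  have hc : Real.cos (Real.pi / 4) < Real.cos z.arg := by
    rw [← Real.cos_abs z.arg]
    exact Real.cos_lt_cos_of_nonneg_of_le_pi (abs_nonneg _) (by linarith) h1'
  have hs : |Real.sin z.arg| < Real.sin (Real.pi / 4) := by
    rw [abs_lt] at h1' ⊢
    rw [← Real.sin_neg]
    constructor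
    · apply Real.sin_lt_sin_of_lt_of_le_pi_div_two <;> linarith
    · apply Real.sin_lt_sin_of_lt_of_le_pi_div_two <;> linarith
  rw [Real.sin_pi_div_four] at hs
  rw [Real.cos_pi_div_four] at hc
  linarith

/-- Matchings of `G` inside `S`. -/
noncomputable def matchIn {n : ℕ} (G : SimpleGraph (Fin n)) (S : Finset (Fin n)) :
    Finset (Finset (Sym2 (Fin n))) :=
  Finset.univ.filter (fun M => IsMatching G M ∧ ∀ e ∈ M, ∀ a ∈ e, a ∈ S)

/-- Matching polynomial of the induced subgraph on `S`. -/
noncomputable def matchPoly {n : ℕ} (G : SimpleGraph (Fin n)) (w : Sym2 (Fin n) → ℝ)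
    (x : Fin n → ℂ) (S : Finset (Fin n)) : ℂ :=
  ∑ M ∈ matchIn G S, (∏ e ∈ M, (w e : ℂ)) * ∏ v ∈ S.filter (fun v => ∀ e ∈ M, v ∉ e), x v

lemma matchPoly_empty {n : ℕ} (G : SimpleGraph (Fin n)) (w : Sym2 (Fin n) → ℝ)
    (x : Fin n → ℂ) : matchPoly G w x ∅ = 1 := by
  have : matchIn G ∅ = {∅} := by
    ext M
    simp only [matchIn, Finset.mem_filter, Finset.mem_univ, true_and, Finset.mem_singleton]
    constructor
    · rintro ⟨_, h⟩
      by_contra hM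
      obtain ⟨e, he⟩ := Finset.nonempty_iff_ne_empty.2 hM
      induction e with
      | h a b => exact absurd (h _ he a (by simp)) (by simp)
    · rintro rfl
      simp [IsMatching]
  simp [matchPoly, this]

lemma matchPoly_rec {n : ℕ} (G : SimpleGraph (Fin n)) (w : Sym2 (Fin n) → ℝ)
    (x : Fin n → ℂ) (S : Finset (Fin n)) (v : Fin n) (hv : v ∈ S) :
    matchPoly G w x S = x v * matchPoly G w x (S.erase v) +
      ∑ u ∈ (S.erase v).filter (fun u => G.Adj v u),
        (w s(v, u) : ℂ) * matchPoly G w x ((S.erase v).erase u) := by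
  have hsplit := Finset.sum_filter_add_sum_filter_not (matchIn G S)
    (fun M => ∀ e ∈ M, v ∉ e)
    (fun M => (∏ e ∈ M, (w e : ℂ)) * ∏ v ∈ S.filter (fun v => ∀ e ∈ M, v ∉ e), x v)
  unfold matchPoly
  rw [← hsplit]
  congr 1
  · have hset : (matchIn G S).filter (fun M => ∀ e ∈ M, v ∉ e) = matchIn G (S.erase v) := by
      ext M
      simp only [matchIn, Finset.mem_filter, Finset.mem_univ, true_and, Finset.mem_erase]
      constructor
      · rintro ⟨⟨h1, h2⟩, h3⟩
        exact ⟨h1, fun e he a ha => ⟨fun hav => h3 e he (hav ▸ ha), h2 e he a ha⟩⟩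
      · rintro ⟨h1, h2⟩
        exact ⟨⟨h1, fun e he a ha => (h2 e he a ha).2⟩, fun e he hve => (h2 e he v hve).1 rfl⟩
    rw [hset, Finset.mul_sum]
    refine Finset.sum_congr rfl fun M hM => ?_
    have hv' : ∀ e ∈ M, v ∉ e := by
      rw [← hset] at hM
      exact (Finset.mem_filter.1 hM).2
    have : S.filter (fun v => ∀ e ∈ M, v ∉ e) =
        insert v ((S.erase v).filter (fun v => ∀ e ∈ M, v ∉ e)) := by
      ext a
      simp only [Finset.mem_filter, Finset.mem_insert, Finset.mem_erase]
      by_cases hav : a = v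
      · subst hav; simpa [hv] using hv'
      · simp [hav]
    rw [this, Finset.prod_insert (by simp)]
    ring
  · simp_rw [Finset.mul_sum]
    rw [Finset.sum_sigma']
    symm
    have key : ∀ p ∈ ((S.erase v).filter (fun u => G.Adj v u)).sigma
        (fun u => matchIn G ((S.erase v).erase u)),
        p.1 ≠ v ∧ p.1 ∈ S ∧ G.Adj v p.1 ∧ IsMatching G p.2 ∧
        (∀ e ∈ p.2, ∀ a ∈ e, a ≠ p.1 ∧ a ≠ v ∧ a ∈ S) := by
      rintro ⟨u, M⟩ hp
      simp only [matchIn, Finset.mem_sigma, Finset.mem_filter, Finset.mem_erase, Finset.mem_univ,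
        true_and] at hp
      exact ⟨hp.1.1.1, hp.1.1.2, hp.1.2, hp.2.1, hp.2.2⟩
    refine Finset.sum_bij (fun p _ => insert s(v, p.1) p.2) ?_ ?_ ?_ ?_
    · rintro ⟨u, M⟩ hp
      obtain ⟨h1, h2, h3, h4, h5⟩ := key _ hp
      simp only at h1 h2 h3 h4 h5
      simp only [matchIn, Finset.mem_filter, Finset.mem_univ, true_and]
      refine ⟨⟨⟨?_, ?_⟩, ?_⟩, ?_⟩
      · intro e he
        rcases Finset.mem_insert.1 he with rfl | he
        · simpa using h3
        · exact h4.1 e he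
      · intro e he f hf hef a ha
        rcases Finset.mem_insert.1 he with rfl | he <;> rcases Finset.mem_insert.1 hf with rfl | hf
        · exact hef rfl
        · have := h5 f hf a ha.2
          have h' := ha.1
          simp only [Sym2.mem_iff] at h'
          tauto
        · have := h5 e he a ha.1
          have h' := ha.2
          simp only [Sym2.mem_iff] at h'
          tauto
        · exact h4.2 e he f hf hef a ha
      · intro e he a ha
        rcases Finset.mem_insert.1 he with rfl | he
        · rcases Sym2.mem_iff.1 ha with rfl | rfl
          · exact hv
          · exact h2
        · exact (h5 e he a ha).2.2
      · intro h
        exact h _ (Finset.mem_insert_self _ _) (by simp)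
    · rintro ⟨u, M⟩ hp ⟨u', M'⟩ hp' heq
      obtain ⟨h1, h2, h3, h4, h5⟩ := key _ hp
      obtain ⟨h1', h2', h3', h4', h5'⟩ := key _ hp'
      simp only at h1 h2 h3 h4 h5 h1' h2' h3' h4' h5' heq
      have hn : s(v, u) ∉ M := fun h => (h5 _ h v (by simp)).2.1 rfl
      have hn' : s(v, u') ∉ M' := fun h => (h5' _ h v (by simp)).2.1 rfl
      have hu : u = u' := by
        have hm : s(v, u) ∈ insert s(v, u') M' := heq ▸ Finset.mem_insert_self _ _
        rcases Finset.mem_insert.1 hm with h | h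
        · exact Sym2.congr_right.1 h
        · exact absurd rfl (h5' _ h v (by simp)).2.1
      subst hu
      have : M = M' := by
        rw [← Finset.erase_insert hn, heq, Finset.erase_insert hn']
      rw [this]
    · intro M hM
      simp only [matchIn, Finset.mem_filter, Finset.mem_univ, true_and, not_forall, not_not] at hM
      obtain ⟨⟨h1, h2⟩, e, he, hve⟩ := hM
      obtain ⟨u, rfl⟩ := Sym2.mem_iff_exists.1 hve
      have hadj : G.Adj v u := by simpa using h1.1 _ he
      refine ⟨⟨u, M.erase s(v, u)⟩, ?_, Finset.insert_erase he⟩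
      simp only [matchIn, Finset.mem_sigma, Finset.mem_filter, Finset.mem_erase, Finset.mem_univ,
        true_and]
      refine ⟨⟨⟨hadj.ne', h2 _ he u (by simp)⟩, hadj⟩, ⟨?_, ?_⟩, ?_⟩
      · intro f hf
        exact h1.1 f (Finset.mem_of_mem_erase hf)
      · intro f hf g hg
        exact h1.2 f (Finset.mem_of_mem_erase hf) g (Finset.mem_of_mem_erase hg)
      · rintro f ⟨hf1, hf2⟩ a ha
        refine ⟨?_, ?_, h2 f hf2 a ha⟩
        · rintro rfl
          exact h1.2 f hf2 _ he hf1 a ⟨ha, by simp⟩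
        · rintro rfl
          exact h1.2 f hf2 _ he hf1 a ⟨ha, by simp⟩
    · rintro ⟨u, M⟩ hp
      obtain ⟨h1, h2, h3, h4, h5⟩ := key _ hp
      simp only at h1 h2 h3 h4 h5
      have hn : s(v, u) ∉ M := fun h => (h5 _ h v (by simp)).2.1 rfl
      rw [Finset.prod_insert hn]
      have : S.filter (fun a => ∀ e ∈ insert s(v, u) M, a ∉ e) =
          ((S.erase v).erase u).filter (fun a => ∀ e ∈ M, a ∉ e) := by
        ext a
        simp only [Finset.mem_filter, Finset.mem_erase, Finset.forall_mem_insert, Sym2.mem_iff]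
        tauto
      rw [this]
      ring

lemma matchPoly_ne {n : ℕ} (G : SimpleGraph (Fin n)) (w : Sym2 (Fin n) → ℝ)
    (hw : ∀ e ∈ G.edgeSet, 0 ≤ w e) (x : Fin n → ℂ) (hx : ∀ v, 0 < (x v).re) :
    ∀ (m : ℕ) (S : Finset (Fin n)), S.card = m → matchPoly G w x S ≠ 0 ∧
      ∀ v ∈ S, 0 < (matchPoly G w x S / matchPoly G w x (S.erase v)).re := by
  intro m
  induction m with
  | zero =>
    intro S hS
    rw [Finset.card_eq_zero] at hS
    subst hS
    simp [matchPoly_empty]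
  | succ m ih =>
    intro S hS
    have main : ∀ v ∈ S, 0 < (matchPoly G w x S / matchPoly G w x (S.erase v)).re := by
      intro v hv
      have hc : (S.erase v).card = m := by rw [Finset.card_erase_of_mem hv, hS]; rfl
      obtain ⟨hne, hre⟩ := ih _ hc
      rw [matchPoly_rec G w x S v hv, add_div, mul_div_cancel_right₀ _ hne, Finset.sum_div,
        Complex.add_re, Complex.re_sum]
      refine add_pos_of_pos_of_nonneg (hx v) (Finset.sum_nonneg fun u hu => ?_)
      rw [Finset.mem_filter] at hu
      have h1 := hre u hu.1
      rw [mul_div_assoc, Complex.re_ofReal_mul]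
      refine mul_nonneg (hw _ (by simpa using hu.2)) ?_
      rw [← inv_div, Complex.inv_re]
      exact div_nonneg h1.le (Complex.normSq_nonneg _)
    refine ⟨?_, main⟩
    obtain ⟨v, hv⟩ : S.Nonempty := by rw [← Finset.card_pos]; omega
    intro h0
    have := main v hv
    simp [h0] at this

lemma full_ne {n : ℕ} (G : SimpleGraph (Fin n)) (w : Sym2 (Fin n) → ℝ)
    (hw : ∀ e ∈ G.edgeSet, 0 ≤ w e) (x : Fin n → ℂ) (hx : ∀ v, 0 < (x v).re) :
    ∑ M ∈ Finset.univ.filter (fun M : Finset (Sym2 (Fin n)) => IsMatching G M),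
      ((∏ e ∈ M, w e : ℝ) : ℂ) * ∏ v ∈ uncovered M, x v ≠ 0 := by
  have := (matchPoly_ne G w hw x hx _ Finset.univ rfl).1
  simpa [matchPoly, matchIn, uncovered] using this

lemma card_uncovered {n : ℕ} (G : SimpleGraph (Fin n)) (M : Finset (Sym2 (Fin n)))
    (hM : IsMatching G M) : (uncovered M).card + 2 * M.card = n := by
  have h1 : uncovered M = (M.biUnion (fun e => e.toFinset))ᶜ := by
    ext a
    simp [uncovered]
  have h2 : (M.biUnion (fun e => e.toFinset)).card = 2 * M.card := by
    rw [Finset.card_biUnion]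
    · rw [Finset.sum_congr rfl (g := fun _ => 2)]
      · simp [mul_comm]
      · intro e he
        exact Sym2.card_toFinset_of_not_isDiag e (G.not_isDiag_of_mem_edgeSet (hM.1 e he))
    · intro e he f hf hef
      change Disjoint e.toFinset f.toFinset
      rw [Finset.disjoint_left]
      intro a ha hb
      exact hM.2 e he f hf hef a ⟨Sym2.mem_toFinset.1 ha, Sym2.mem_toFinset.1 hb⟩
  have h3 := Finset.card_compl_add_card (M.biUnion (fun e => e.toFinset))
  rw [h1, ← h2, h3]
  simp

lemma exists_sqrt (t : ℂ) (ht : t ≠ 0) (hre : 0 ≤ t.re) :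
    ∃ c : ℂ, c ^ 2 = t ∧ 0 < c.re ∧ |c.im| ≤ c.re := by
  have key : ∀ c : ℂ, c ^ 2 = t → 0 ≤ c.re → 0 < c.re ∧ |c.im| ≤ c.re := by
    intro c hc h0
    have h1 : t.re = c.re ^ 2 - c.im ^ 2 := by
      rw [← hc, pow_two, Complex.mul_re]; ring
    have h2 : |c.im| ≤ c.re := abs_le_of_sq_le_sq (by linarith) h0
    refine ⟨lt_of_le_of_ne h0 ?_, h2⟩
    intro h3
    have h4 : c.im = 0 := abs_eq_zero.1 (le_antisymm (by linarith) (abs_nonneg _))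
    have : c = 0 := Complex.ext h3.symm h4
    apply ht
    rw [← hc, this]; simp
  obtain ⟨c, hc⟩ := IsAlgClosed.exists_pow_nat_eq t (n := 2) (by norm_num)
  rcases le_total 0 c.re with h | h
  · exact ⟨c, hc, key c hc h⟩
  · have hc' : (-c) ^ 2 = t := by rw [neg_sq, hc]
    exact ⟨-c, hc', key (-c) hc' (by simpa using h)⟩

lemma halfplane_ne {n : ℕ} (G : SimpleGraph (Fin n)) (w : Sym2 (Fin n) → ℝ)
    (hw : ∀ e ∈ G.edgeSet, 0 ≤ w e) (x : Fin n → ℂ) (hx : ∀ v, |(x v).im| < (x v).re)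
    (t : ℂ) (ht : 0 ≤ t.re) :
    ∑ M ∈ Finset.univ.filter (fun M : Finset (Sym2 (Fin n)) => IsMatching G M),
      ((∏ e ∈ M, w e : ℝ) : ℂ) * (∏ v ∈ uncovered M, x v) * t ^ M.card ≠ 0 := by
  have hpos : ∀ v, 0 < (x v).re := fun v => (abs_nonneg _).trans_lt (hx v)
  by_cases h0 : t = 0
  · subst h0
    rw [Finset.sum_eq_single ∅]
    · simp only [Finset.prod_empty, Complex.ofReal_one, one_mul, Finset.card_empty, pow_zero,
        mul_one]
      rw [Finset.prod_ne_zero_iff]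
      intro v _ hv
      have := hpos v
      simp [hv] at this
    · intro M _ hM
      have : M.card ≠ 0 := by simpa using hM
      simp [this]
    · intro h
      exact absurd (by simp [IsMatching]) h
  · obtain ⟨c, hc, hc0, hc1⟩ := exists_sqrt t h0 ht
    have hcne : c ≠ 0 := by rintro rfl; simp at hc0
    have h := full_ne G w hw (fun v => c⁻¹ * x v) (by
      intro v
      have e : (c⁻¹ * x v).re = (c.re * (x v).re + c.im * (x v).im) / Complex.normSq c := by
        rw [Complex.mul_re, Complex.inv_re, Complex.inv_im]; ring
      rw [e]
      refine div_pos ?_ (Complex.normSq_pos.2 hcne)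
      have h1 : |c.im * (x v).im| < c.re * (x v).re := by
        rw [abs_mul]
        calc |c.im| * |(x v).im| ≤ c.re * |(x v).im| :=
              mul_le_mul_of_nonneg_right hc1 (abs_nonneg _)
          _ < _ := mul_lt_mul_of_pos_left (hx v) hc0
      have := (abs_lt.1 h1).1
      linarith)
    have h2 := mul_ne_zero (pow_ne_zero n hcne) h
    rw [Finset.mul_sum] at h2
    convert h2 using 1
    refine Finset.sum_congr rfl fun M hM => ?_
    have hcard := card_uncovered G M (Finset.mem_filter.1 hM).2
    rw [Finset.prod_mul_distrib, Finset.prod_const, ← hc]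
    have e : c ^ n = c ^ (uncovered M).card * (c ^ 2) ^ M.card := by
      rw [← pow_mul, ← pow_add, hcard]
    rw [e, inv_pow]
    field_simp

lemma W_nonneg {n : ℕ} {G : SimpleGraph (Fin n)} {w : Sym2 (Fin n) → ℝ}
    (hw : ∀ e ∈ G.edgeSet, 0 ≤ w e) {M : Finset (Sym2 (Fin n))} (hM : IsMatching G M) :
    0 ≤ ∏ e ∈ M, w e := Finset.prod_nonneg fun e he => hw e (hM.1 e he)

lemma top_ne {n : ℕ} (G : SimpleGraph (Fin n)) (w : Sym2 (Fin n) → ℝ)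
    (hw : ∀ e ∈ G.edgeSet, 0 ≤ w e) (d : ℕ)
    (hd : ∀ M, IsMatching G M → d < M.card → ∏ e ∈ M, w e = 0)
    (M0 : Finset (Sym2 (Fin n))) (hM0 : IsMatching G M0) (hM0d : M0.card = d)
    (hM0w : ∏ e ∈ M0, w e ≠ 0) (x : Fin n → ℂ) (hx : ∀ v, 0 < (x v).re) :
    ∑ M ∈ Finset.univ.filter
        (fun M : Finset (Sym2 (Fin n)) => IsMatching G M ∧ M.card = d),
      ((∏ e ∈ M, w e : ℝ) : ℂ) * ∏ v ∈ uncovered M, x v ≠ 0 := by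
  have conv : ∀ x : Fin n → ℂ, ∑ M ∈ Finset.univ.filter
        (fun M : Finset (Sym2 (Fin n)) => IsMatching G M ∧ M.card = d),
      ((∏ e ∈ M, w e : ℝ) : ℂ) * ∏ v ∈ uncovered M, x v =
      ∑ M ∈ Finset.univ.filter (fun M : Finset (Sym2 (Fin n)) => IsMatching G M),
        (if M.card = d then ((∏ e ∈ M, w e : ℝ) : ℂ) else 0) * ∏ v ∈ uncovered M, x v := by
    intro x
    rw [← Finset.filter_filter, Finset.sum_filter]
    refine Finset.sum_congr rfl fun M _ => ?_
    split_ifs <;> simp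
  rw [conv]
  refine hurwitz _ uncovered
    (fun m M => ((∏ e ∈ M, w e : ℝ) : ℂ) * (if M.card ≤ d then
      ((1 / ((m : ℝ) + 1) : ℝ) : ℂ) ^ (d - M.card) else 0)) _ ?_
    {z | ∀ v, 0 < (z v).re} ?_ ?_ (fun _ => 1) ?_ x hx
  · intro M hM
    have hM' := (Finset.mem_filter.1 hM).2
    have hlim : Filter.Tendsto (fun m : ℕ => ((1 / ((m : ℝ) + 1) : ℝ) : ℂ)) Filter.atTop
        (nhds 0) := by
      have := (Complex.continuous_ofReal.tendsto 0).comp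
        (tendsto_one_div_add_atTop_nhds_zero_nat (𝕜 := ℝ))
      simpa [Function.comp_def] using this
    rcases lt_trichotomy M.card d with h | h | h
    · simp only [h.le, h.ne, if_true, if_false]
      have := (hlim.pow (d - M.card)).const_mul ((∏ e ∈ M, w e : ℝ) : ℂ)
      rwa [zero_pow (by omega), mul_zero] at this
    · simp [h]
    · simp [h.not_ge, h.ne']
  · have : {z : Fin n → ℂ | ∀ v, 0 < (z v).re} = ⋂ v, {z | 0 < (z v).re} := by
      ext; simp
    rw [this]
    exact isOpen_iInter_of_finite fun v => isOpen_lt (by fun_prop) (by fun_prop)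
  · intro m z hz
    have hm : (0 : ℝ) < m + 1 := by positivity
    have h := full_ne G (fun e => (m + 1) * w e) (fun e he => mul_nonneg hm.le (hw e he)) z hz
    have hmc : ((1 / ((m : ℝ) + 1) : ℝ) : ℂ) ≠ 0 := by
      rw [Complex.ofReal_ne_zero]; positivity
    have h2 := mul_ne_zero (pow_ne_zero d hmc) h
    rw [Finset.mul_sum] at h2
    convert h2 using 1
    refine Finset.sum_congr rfl fun M hM => ?_
    have hM' := (Finset.mem_filter.1 hM).2
    rw [Finset.prod_mul_distrib, Finset.prod_const]
    by_cases hle : M.card ≤ d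
    · rw [if_pos hle]
      obtain ⟨j, rfl⟩ := Nat.exists_eq_add_of_le hle
      have hone : ((1 / ((m : ℝ) + 1) : ℝ) : ℂ) ^ M.card * (((m : ℝ) + 1 : ℝ) : ℂ) ^ M.card = 1 := by
        rw [← mul_pow, ← Complex.ofReal_mul, one_div_mul_cancel hm.ne']
        simp
      rw [Nat.add_sub_cancel_left, pow_add, Complex.ofReal_mul, Complex.ofReal_pow]
      linear_combination (-((∏ e ∈ M, w e : ℝ) : ℂ) * ((1 / ((m : ℝ) + 1) : ℝ) : ℂ) ^ j *
        ∏ v ∈ uncovered M, z v) * hone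
    · rw [if_neg hle, hd M hM' (by omega)]
      simp
  · rw [← conv]
    simp only [Finset.prod_const_one, mul_one]
    rw [← Complex.ofReal_sum, Complex.ofReal_ne_zero]
    apply ne_of_gt
    apply Finset.sum_pos'
    · intro M hM
      exact W_nonneg hw (Finset.mem_filter.1 hM).2.1
    · exact ⟨M0, by simp [hM0, hM0d], lt_of_le_of_ne (W_nonneg hw hM0) hM0w.symm⟩

lemma coeff_sector_ne {n : ℕ} (G : SimpleGraph (Fin n)) (w : Sym2 (Fin n) → ℝ)
    (hw : ∀ e ∈ G.edgeSet, 0 ≤ w e) (k : ℕ)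
    (M0 : Finset (Sym2 (Fin n))) (hM0 : IsMatching G M0) (hM0d : M0.card = k)
    (hM0w : ∏ e ∈ M0, w e ≠ 0) (x : Fin n → ℂ) (hx : ∀ v, |(x v).im| < (x v).re) :
    ∑ M ∈ Finset.univ.filter
        (fun M : Finset (Sym2 (Fin n)) => IsMatching G M ∧ M.card = k),
      ((∏ e ∈ M, w e : ℝ) : ℂ) * ∏ v ∈ uncovered M, x v ≠ 0 := by
  have hpos : ∀ v, 0 < (x v).re := fun v => (abs_nonneg _).trans_lt (hx v)
  obtain ⟨M1, hM1, hmax⟩ := Finset.exists_max_image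
    (Finset.univ.filter (fun M : Finset (Sym2 (Fin n)) => IsMatching G M ∧ ∏ e ∈ M, w e ≠ 0))
    Finset.card ⟨M0, by simp only [Finset.mem_filter, Finset.mem_univ, true_and]; exact ⟨hM0, hM0w⟩⟩
  simp only [Finset.mem_filter, Finset.mem_univ, true_and] at hM1 hmax
  have htop := top_ne G w hw M1.card (by
    intro M hM hlt
    by_contra hne
    have := hmax M ⟨hM, hne⟩
    omega) M1 hM1.1 rfl hM1.2 x hpos
  have hk : k ≤ M1.card := hM0d ▸ hmax M0 ⟨hM0, hM0w⟩
  let q : Polynomial ℂ := ∑ M ∈ Finset.univ.filter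
    (fun M : Finset (Sym2 (Fin n)) => IsMatching G M),
    Polynomial.C (((∏ e ∈ M, w e : ℝ) : ℂ) * ∏ v ∈ uncovered M, x v) * Polynomial.X ^ M.card
  have hcoeff : ∀ j, q.coeff j = ∑ M ∈ Finset.univ.filter
        (fun M : Finset (Sym2 (Fin n)) => IsMatching G M ∧ M.card = j),
      ((∏ e ∈ M, w e : ℝ) : ℂ) * ∏ v ∈ uncovered M, x v := by
    intro j
    rw [← Finset.filter_filter, Finset.sum_filter, Polynomial.finsetSum_coeff]
    refine Finset.sum_congr rfl fun M _ => ?_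
    rw [Polynomial.coeff_C_mul_X_pow]
    simp only [eq_comm]
  have hroots : ∀ t : ℂ, 0 ≤ t.re → q.eval t ≠ 0 := by
    intro t ht
    have := halfplane_ne G w hw x hx t ht
    simpa only [q, Polynomial.eval_finsetSum, Polynomial.eval_mul, Polynomial.eval_C,
      Polynomial.eval_pow, Polynomial.eval_X] using this
  rw [← hcoeff] at htop ⊢
  refine coeff_ne_of_roots k q ?_ (hk.trans (Polynomial.le_natDegree_of_ne_zero htop)) hroots
  intro h0
  simp [h0] at htop

/-- The polynomial `g(z) = Σ_{M matching of G, |M| = k} weight(M) Π_{v ∉ V(M)} z_v`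
encoding the monomers of `k`-matchings is either identically zero or `Γ_{1/2}`-stable. -/
theorem kMatching_monomer_poly_sectorStable (n : ℕ) (G : SimpleGraph (Fin n))
    (w : Sym2 (Fin n) → ℝ) (hw : ∀ e ∈ G.edgeSet, 0 ≤ w e)
    (lam : Fin n → ℝ) (hlam : ∀ v, 0 ≤ lam v) (k : ℕ) :
    (∀ z : Fin n → ℂ,
      (∑ M ∈ Finset.univ.filter
          (fun M : Finset (Sym2 (Fin n)) => IsMatching G M ∧ M.card = k),
        (matchingWeight w lam M : ℂ) * ∏ v ∈ uncovered M, z v) = 0) ∨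
    (∀ z : Fin n → ℂ, (∀ v, inSector (1 / 2) (z v)) →
      (∑ M ∈ Finset.univ.filter
          (fun M : Finset (Sym2 (Fin n)) => IsMatching G M ∧ M.card = k),
        (matchingWeight w lam M : ℂ) * ∏ v ∈ uncovered M, z v) ≠ 0) := by
  by_cases hz : ∀ z : Fin n → ℂ,
      (∑ M ∈ Finset.univ.filter
          (fun M : Finset (Sym2 (Fin n)) => IsMatching G M ∧ M.card = k),
        (matchingWeight w lam M : ℂ) * ∏ v ∈ uncovered M, z v) = 0
  · exact Or.inl hz
  right
  intro z hsec
  rw [not_forall] at hz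
  obtain ⟨z0, hz0⟩ := hz
  obtain ⟨M0, hM0, hM0ne⟩ := Finset.exists_ne_zero_of_sum_ne_zero hz0
  obtain ⟨hM0m, hM0k⟩ := (Finset.mem_filter.1 hM0).2
  have hM0w : ∏ e ∈ M0, w e ≠ 0 := by
    intro h
    apply hM0ne
    simp [matchingWeight, h]
  refine hurwitz _ uncovered
    (fun m M => ((matchingWeight w (fun v => lam v + 1 / ((m : ℝ) + 1)) M : ℝ) : ℂ)) _ ?_
    {z | ∀ v, |(z v).im| < (z v).re} ?_ ?_ z0 hz0 z (fun v => sector_of (hsec v))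
  · intro M _
    refine (Complex.continuous_ofReal.tendsto _).comp ?_
    unfold matchingWeight
    refine Filter.Tendsto.const_mul _ (tendsto_finsetProd _ fun v _ => ?_)
    simpa using (tendsto_one_div_add_atTop_nhds_zero_nat (𝕜 := ℝ)).const_add (lam v)
  · have : {z : Fin n → ℂ | ∀ v, |(z v).im| < (z v).re} = ⋂ v, {z | |(z v).im| < (z v).re} := by
      ext; simp
    rw [this]
    exact isOpen_iInter_of_finite fun v => isOpen_lt (by fun_prop) (by fun_prop)
  · intro m y hy
    have hp : ∀ v, 0 < lam v + 1 / ((m : ℝ) + 1) := fun v =>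
      add_pos_of_nonneg_of_pos (hlam v) (by positivity)
    have h := coeff_sector_ne G w hw k M0 hM0m hM0k hM0w
      (fun v => ((lam v + 1 / ((m : ℝ) + 1) : ℝ) : ℂ) * y v) (by
        intro v
        rw [Complex.re_ofReal_mul, Complex.im_ofReal_mul, abs_mul, abs_of_pos (hp v)]
        exact mul_lt_mul_of_pos_left (hy v) (hp v))
    convert h using 1
    refine Finset.sum_congr rfl fun M _ => ?_
    rw [Finset.prod_mul_distrib, matchingWeight, Complex.ofReal_mul, ← Complex.ofReal_prod]
    ring
end

section
/- Let G = (V, E) be a finite graph on n vertices with edge weights w : E → ℝ_{≥0} and vertex weights λ : V → ℝ_{≥0}, and define the weight of a matching M as weight(M) = Π_{e∈M} w(e) · Π_{v not covered by M} λ(v). Then the homogeneous polynomial in 2n variables g(z₁,…,zₙ,z'₁,…,z'ₙ) = Σ_{M a matching of G} weight(M) · Π_{v not covered by M} z_v · Π_{v covered by M} z'_v is either identically zero or Γ_{1/2}-stable (i.e., sector-stable for a sector of aperture π/2). -/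
open Finset
open scoped Classical

/-- Matchings of `G` inside the vertex set `S`. -/
noncomputable def mts {n : ℕ} (G : SimpleGraph (Fin n)) (S : Finset (Fin n)) :
    Finset (Finset (Sym2 (Fin n))) :=
  Finset.univ.filter (fun M => IsMatching G M ∧ ∀ e ∈ M, ∀ v ∈ e, v ∈ S)

/-- Uncovered vertices inside `S`. -/
noncomputable def unc {n : ℕ} (S : Finset (Fin n)) (M : Finset (Sym2 (Fin n))) :
    Finset (Fin n) := S.filter (fun v => ∀ e ∈ M, v ∉ e)

/-- Weight of a matching inside `S`. -/
noncomputable def cf {n : ℕ} (w : Sym2 (Fin n) → ℝ) (lam : Fin n → ℝ) (S : Finset (Fin n))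
    (M : Finset (Sym2 (Fin n))) : ℝ := (∏ e ∈ M, w e) * ∏ v ∈ unc S M, lam v

/-- The monomer-dimer partition function of `S`. -/
noncomputable def QQ {n : ℕ} (G : SimpleGraph (Fin n)) (w : Sym2 (Fin n) → ℝ)
    (lam : Fin n → ℝ) (S : Finset (Fin n)) (y : Fin n → ℂ) : ℂ :=
  ∑ M ∈ mts G S, (cf w lam S M : ℂ) * ∏ v ∈ unc S M, y v

section
variable {n : ℕ} (G : SimpleGraph (Fin n)) (w : Sym2 (Fin n) → ℝ) (lam : Fin n → ℝ)

lemma mts_erase (S : Finset (Fin n)) (v : Fin n) :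
    mts G (S.erase v) = (mts G S).filter (fun M => ∀ e ∈ M, v ∉ e) := by
  ext M
  simp only [mts, Finset.mem_filter, Finset.mem_univ, true_and, Finset.mem_erase]
  constructor
  · rintro ⟨h1, h2⟩
    exact ⟨⟨h1, fun e he u hu => (h2 e he u hu).2⟩, fun e he hv => (h2 e he v hv).1 rfl⟩
  · rintro ⟨⟨h1, h2⟩, h3⟩
    exact ⟨h1, fun e he u hu => ⟨fun h => h3 e he (h ▸ hu), h2 e he u hu⟩⟩

lemma unc_insert (S : Finset (Fin n)) (v : Fin n) (hv : v ∈ S) (M : Finset (Sym2 (Fin n)))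
    (hM : ∀ e ∈ M, v ∉ e) : unc S M = insert v (unc (S.erase v) M) := by
  ext u
  simp only [unc, Finset.mem_filter, Finset.mem_insert, Finset.mem_erase]
  by_cases h : u = v
  · subst h; simp [hv]; exact hM
  · simp [h]

lemma not_mem_unc (S : Finset (Fin n)) (v : Fin n) (M : Finset (Sym2 (Fin n))) :
    v ∉ unc (S.erase v) M := by simp [unc]

lemma cf_erase (S : Finset (Fin n)) (v : Fin n) (hv : v ∈ S) (M : Finset (Sym2 (Fin n)))
    (hM : ∀ e ∈ M, v ∉ e) : cf w lam S M = lam v * cf w lam (S.erase v) M := by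
  unfold cf
  rw [unc_insert S v hv M hM, Finset.prod_insert (not_mem_unc S v M)]; ring

lemma edge_sum (S : Finset (Fin n)) (v u : Fin n) (hv : v ∈ S) (hu : u ∈ S)
    (y : Fin n → ℂ) :
    ∑ M ∈ (mts G S).filter (fun M => s(v, u) ∈ M),
        (cf w lam S M : ℂ) * ∏ t ∈ unc S M, y t
      = ((if G.Adj v u then w s(v, u) else 0 : ℝ) : ℂ) * QQ G w lam ((S.erase v).erase u) y := by
  by_cases ha : G.Adj v u
  swap
  · rw [Finset.sum_eq_zero]
    · simp [ha]
    · intro M hM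
      simp only [mts, Finset.mem_filter, Finset.mem_univ, true_and] at hM
      exact absurd (hM.1.1.1 _ hM.2) (by simpa using ha)
  rw [if_pos ha, QQ, Finset.mul_sum]
  symm
  have hnot : ∀ M ∈ mts G ((S.erase v).erase u), s(v, u) ∉ M := by
    intro M hM h
    simp only [mts, Finset.mem_filter, Finset.mem_univ, true_and] at hM
    have := hM.2 _ h v (by simp)
    simp at this
  refine Finset.sum_bij' (fun M _ => insert s(v, u) M) (fun M _ => M.erase s(v, u)) ?_ ?_ ?_ ?_ ?_
  · intro M hM
    have hM' := hM
    simp only [mts, Finset.mem_filter, Finset.mem_univ, true_and, Finset.mem_erase] at hM ⊢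
    obtain ⟨⟨h1, h2⟩, h3⟩ := hM
    refine ⟨⟨⟨?_, ?_⟩, ?_⟩, Finset.mem_insert_self _ _⟩
    · intro e he
      rcases Finset.mem_insert.1 he with rfl | he
      · simpa using ha
      · exact h1 e he
    · intro e he f hf hef t ht
      rcases Finset.mem_insert.1 he with rfl | he <;> rcases Finset.mem_insert.1 hf with rfl | hf
      · exact hef rfl
      · have := h3 f hf t ht.2
        have := Sym2.mem_iff.1 ht.1
        tauto
      · have := h3 e he t ht.1
        have := Sym2.mem_iff.1 ht.2
        tauto
      · exact h2 e he f hf hef t ht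
    · intro e he t ht
      rcases Finset.mem_insert.1 he with rfl | he
      · rcases Sym2.mem_iff.1 ht with rfl | rfl <;> assumption
      · exact (h3 e he t ht).2.2
  · intro M hM
    simp only [mts, Finset.mem_filter, Finset.mem_univ, true_and, Finset.mem_erase] at hM ⊢
    obtain ⟨⟨⟨h1, h2⟩, h3⟩, h4⟩ := hM
    refine ⟨⟨fun e he => h1 e (Finset.mem_of_mem_erase he), fun e he f hf =>
      h2 e (Finset.mem_of_mem_erase he) f (Finset.mem_of_mem_erase hf)⟩, ?_⟩
    intro e he t ht
    obtain ⟨hne, he⟩ := he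
    refine ⟨?_, ?_, h3 e he t ht⟩
    · rintro rfl
      exact h2 e he _ h4 hne t ⟨ht, by simp⟩
    · rintro rfl
      exact h2 e he _ h4 hne t ⟨ht, by simp⟩
  · intro M hM
    exact Finset.erase_insert (hnot M hM)
  · intro M hM
    exact Finset.insert_erase (Finset.mem_filter.1 hM).2
  · intro M hM
    have hun : unc S (insert s(v, u) M) = unc ((S.erase v).erase u) M := by
      ext t
      simp only [unc, Finset.mem_filter, Finset.mem_insert, Finset.mem_erase,
        forall_eq_or_imp, Sym2.mem_iff, not_or]
      tauto
    rw [hun, cf, cf, hun, Finset.prod_insert (hnot M hM)]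
    push_cast
    ring

lemma QQ_rec (S : Finset (Fin n)) (v : Fin n) (hv : v ∈ S) (y : Fin n → ℂ) :
    QQ G w lam S y = (lam v : ℂ) * y v * QQ G w lam (S.erase v) y +
      ∑ u ∈ S.erase v, ((if G.Adj v u then w s(v, u) else 0 : ℝ) : ℂ) *
        QQ G w lam ((S.erase v).erase u) y := by
  rw [QQ, ← Finset.sum_filter_add_sum_filter_not (mts G S) (fun M => ∀ e ∈ M, v ∉ e)]
  congr 1
  · rw [QQ, mts_erase, Finset.mul_sum]
    refine Finset.sum_congr rfl fun M hM => ?_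
    have hM2 := (Finset.mem_filter.1 hM).2
    rw [cf_erase w lam S v hv M hM2, unc_insert S v hv M hM2,
      Finset.prod_insert (not_mem_unc S v M)]
    push_cast; ring
  · rw [Finset.sum_congr rfl (fun u hu =>
      (edge_sum G w lam S v u hv (Finset.mem_of_mem_erase hu) y).symm)]
    rw [← Finset.sum_biUnion]
    · refine Finset.sum_congr ?_ fun _ _ => rfl
      ext M
      simp only [Finset.mem_filter, Finset.mem_biUnion, not_forall, not_not]
      constructor
      · rintro ⟨hM, e, he, hve⟩
        obtain ⟨u, rfl⟩ := Sym2.mem_iff_exists.1 hve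
        have hM' := hM
        simp only [mts, Finset.mem_filter, Finset.mem_univ, true_and] at hM'
        refine ⟨u, Finset.mem_erase.2 ⟨?_, hM'.2 _ he u (by simp)⟩, hM, he⟩
        rintro rfl
        have := hM'.1.1 _ he
        simp at this
      · rintro ⟨u, hu, hM, he⟩
        exact ⟨hM, _, he, by simp⟩
    · intro a ha b hb hab
      rw [Function.onFun, Finset.disjoint_left]
      intro M h1 h2
      simp only [mts, Finset.mem_filter, Finset.mem_univ, true_and] at h1 h2
      refine h1.1.1.2 _ h1.2 _ h2.2 ?_ v ⟨by simp, by simp⟩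
      intro h
      exact hab (Sym2.congr_right.1 h)

lemma cf_nonneg (hw : ∀ e ∈ G.edgeSet, 0 ≤ w e) (hlam : ∀ v, 0 ≤ lam v) (S : Finset (Fin n))
    (M : Finset (Sym2 (Fin n))) (hM : M ∈ mts G S) : 0 ≤ cf w lam S M := by
  simp only [mts, Finset.mem_filter, Finset.mem_univ, true_and] at hM
  exact mul_nonneg (Finset.prod_nonneg fun e he => hw e (hM.1.1 e he))
    (Finset.prod_nonneg fun v _ => hlam v)

lemma cf_zero (hw : ∀ e ∈ G.edgeSet, 0 ≤ w e) (hlam : ∀ v, 0 ≤ lam v) (S : Finset (Fin n))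
    (h : QQ G w lam S 1 = 0) (M : Finset (Sym2 (Fin n))) (hM : M ∈ mts G S) :
    cf w lam S M = 0 := by
  simp only [QQ, Pi.one_apply, Finset.prod_const_one, mul_one] at h
  rw [← Complex.ofReal_sum, Complex.ofReal_eq_zero] at h
  exact (Finset.sum_eq_zero_iff_of_nonneg (cf_nonneg G w lam hw hlam S)).1 h M hM

lemma QQ_zero (hw : ∀ e ∈ G.edgeSet, 0 ≤ w e) (hlam : ∀ v, 0 ≤ lam v) (S : Finset (Fin n))
    (h : QQ G w lam S 1 = 0) (y : Fin n → ℂ) : QQ G w lam S y = 0 :=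
  Finset.sum_eq_zero fun M hM => by simp [cf_zero G w lam hw hlam S h M hM]

lemma re_inv_pos' {a : ℂ} (h : 0 < a.re) : 0 < (a⁻¹).re := by
  rw [Complex.inv_re]
  exact div_pos h (Complex.normSq_pos.2 (by rintro rfl; simp at h))

lemma QQ_main (hw : ∀ e ∈ G.edgeSet, 0 ≤ w e) (hlam : ∀ v, 0 ≤ lam v) (y : Fin n → ℂ)
    (hy : ∀ v, 0 < (y v).re) (S : Finset (Fin n)) : QQ G w lam S 1 ≠ 0 →
    QQ G w lam S y ≠ 0 ∧ ∀ v ∈ S, QQ G w lam (S.erase v) 1 ≠ 0 →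
      0 < (QQ G w lam S y / QQ G w lam (S.erase v) y).re := by
  induction S using Finset.strongInduction with
  | H S ih =>
  intro hA
  have key : ∀ v ∈ S, QQ G w lam (S.erase v) 1 ≠ 0 →
      0 < (QQ G w lam S y / QQ G w lam (S.erase v) y).re := by
    intro v hv hAv
    obtain ⟨h0, h1⟩ := ih _ (Finset.erase_ssubset hv) hAv
    have hW : ∀ u, 0 ≤ (if G.Adj v u then w s(v, u) else 0 : ℝ) := by
      intro u
      split_ifs with h
      · exact hw _ (by simpa using h)
      · exact le_rfl
    have hr : ∀ u ∈ S.erase v, QQ G w lam ((S.erase v).erase u) 1 ≠ 0 →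
        0 < (QQ G w lam ((S.erase v).erase u) y / QQ G w lam (S.erase v) y).re := by
      intro u hu hAu
      have := re_inv_pos' (h1 u hu hAu)
      rwa [inv_div] at this
    have hr0 : ∀ u ∈ S.erase v,
        0 ≤ (QQ G w lam ((S.erase v).erase u) y / QQ G w lam (S.erase v) y).re := by
      intro u hu
      by_cases hAu : QQ G w lam ((S.erase v).erase u) 1 = 0
      · rw [QQ_zero G w lam hw hlam _ hAu y]; simp
      · exact (hr u hu hAu).le
    have hexp : (QQ G w lam S y / QQ G w lam (S.erase v) y).re = lam v * (y v).re +
        ∑ u ∈ S.erase v, (if G.Adj v u then w s(v, u) else 0 : ℝ) *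
        (QQ G w lam ((S.erase v).erase u) y / QQ G w lam (S.erase v) y).re := by
      rw [QQ_rec G w lam S v hv y, add_div, mul_div_cancel_right₀ _ h0, Finset.sum_div,
        Complex.add_re, Complex.re_sum, Complex.re_ofReal_mul]
      congr 1
      refine Finset.sum_congr rfl fun u _ => ?_
      rw [mul_div_assoc, Complex.re_ofReal_mul]
    rw [hexp]
    have t1 : 0 ≤ lam v * (y v).re := mul_nonneg (hlam v) (hy v).le
    have t2 : ∀ u ∈ S.erase v, 0 ≤ (if G.Adj v u then w s(v, u) else 0 : ℝ) *
        (QQ G w lam ((S.erase v).erase u) y / QQ G w lam (S.erase v) y).re :=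
      fun u hu => mul_nonneg (hW u) (hr0 u hu)
    refine lt_of_le_of_ne (add_nonneg t1 (Finset.sum_nonneg t2)) fun heq => hA ?_
    obtain ⟨e1, e2⟩ := (add_eq_zero_iff_of_nonneg t1 (Finset.sum_nonneg t2)).1 heq.symm
    have e3 := (Finset.sum_eq_zero_iff_of_nonneg t2).1 e2
    have l0 : lam v = 0 := (mul_eq_zero.1 e1).resolve_right (hy v).ne'
    rw [QQ_rec G w lam S v hv 1, l0, Finset.sum_eq_zero]
    · simp
    · intro u hu
      by_cases hAu : QQ G w lam ((S.erase v).erase u) 1 = 0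
      · rw [hAu, mul_zero]
      · rw [(mul_eq_zero.1 (e3 u hu)).resolve_right (hr u hu hAu).ne']; simp
  refine ⟨?_, key⟩
  by_cases hex : ∃ v ∈ S, QQ G w lam (S.erase v) 1 ≠ 0
  · obtain ⟨v, hv, hAv⟩ := hex
    intro h
    have := key v hv hAv
    simp [h] at this
  · push Not at hex
    have : QQ G w lam S y = QQ G w lam S 1 := by
      refine Finset.sum_congr rfl fun M hM => ?_
      rcases (unc S M).eq_empty_or_nonempty with he | ⟨v, hvu⟩
      · simp [he]
      · obtain ⟨hv, hvM⟩ := Finset.mem_filter.1 hvu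
        rw [cf_erase w lam S v hv M hvM, cf_zero G w lam hw hlam _ (hex v hv) M
          (by rw [mts_erase]; exact Finset.mem_filter.2 ⟨hM, hvM⟩)]
        simp
    rwa [this]

end

lemma sector_div_re {a b : ℂ} (ha : inSector (1 / 2) a) (hb : inSector (1 / 2) b) :
    0 < (a / b).re := by
  obtain ⟨ha0, ha⟩ := ha
  obtain ⟨hb0, hb⟩ := hb
  rw [abs_lt] at ha hb
  rw [Complex.div_re, ← add_div]
  refine div_pos ?_ (Complex.normSq_pos.2 hb0)
  rw [← Complex.norm_mul_cos_arg a, ← Complex.norm_mul_cos_arg b,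
    ← Complex.norm_mul_sin_arg a, ← Complex.norm_mul_sin_arg b]
  have hc : 0 < Real.cos (a.arg - b.arg) :=
    Real.cos_pos_of_mem_Ioo ⟨by linarith [ha.1, hb.2], by linarith [ha.2, hb.1]⟩
  rw [Real.cos_sub] at hc
  have := mul_pos (mul_pos (norm_pos_iff.2 ha0) (norm_pos_iff.2 hb0)) hc
  linarith

/-- The homogeneous polynomial in `2n` variables
`g(z, z') = Σ_{M matching of G} weight(M) (Π_{v ∉ V(M)} z_v)(Π_{v ∈ V(M)} z'_v)`
encoding all matchings is either identically zero or `Γ_{1/2}`-stable. -/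
theorem matching_monomer_dimer_poly_sectorStable (n : ℕ) (G : SimpleGraph (Fin n))
    (w : Sym2 (Fin n) → ℝ) (hw : ∀ e ∈ G.edgeSet, 0 ≤ w e)
    (lam : Fin n → ℝ) (hlam : ∀ v, 0 ≤ lam v) :
    (∀ z z' : Fin n → ℂ,
      (∑ M ∈ Finset.univ.filter (fun M : Finset (Sym2 (Fin n)) => IsMatching G M),
        (matchingWeight w lam M : ℂ) *
          ((∏ v ∈ uncovered M, z v) * ∏ v ∈ (uncovered M)ᶜ, z' v)) = 0) ∨
    (∀ z z' : Fin n → ℂ,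
      (∀ v, inSector (1 / 2) (z v)) → (∀ v, inSector (1 / 2) (z' v)) →
      (∑ M ∈ Finset.univ.filter (fun M : Finset (Sym2 (Fin n)) => IsMatching G M),
        (matchingWeight w lam M : ℂ) *
          ((∏ v ∈ uncovered M, z v) * ∏ v ∈ (uncovered M)ᶜ, z' v)) ≠ 0) := by
  have hm : Finset.univ.filter (fun M : Finset (Sym2 (Fin n)) => IsMatching G M)
      = mts G Finset.univ := by simp [mts]
  have hu : ∀ M : Finset (Sym2 (Fin n)), uncovered M = unc Finset.univ M := fun M => rfl
  have hc : ∀ M : Finset (Sym2 (Fin n)), matchingWeight w lam M = cf w lam Finset.univ M :=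
    fun M => rfl
  rw [hm]
  by_cases hA : QQ G w lam Finset.univ 1 = 0
  · left
    intro z z'
    refine Finset.sum_eq_zero fun M hM => ?_
    rw [hc, cf_zero G w lam hw hlam _ hA M hM]; simp
  · right
    intro z z' hz hz'
    have h1 := (QQ_main G w lam hw hlam (fun v => z v / z' v)
      (fun v => sector_div_re (hz v) (hz' v)) Finset.univ hA).1
    have h2 : (∏ v, z' v) ≠ 0 := Finset.prod_ne_zero_iff.2 fun v _ => (hz' v).1
    have h3 := mul_ne_zero h2 h1
    rw [QQ, Finset.mul_sum] at h3
    convert h3 using 1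
    refine Finset.sum_congr rfl fun M _ => ?_
    rw [hc, hu, Finset.prod_div_distrib, ← Finset.prod_mul_prod_compl (unc Finset.univ M) z']
    have h4 : (∏ v ∈ unc Finset.univ M, z' v) ≠ 0 :=
      Finset.prod_ne_zero_iff.2 fun v _ => (hz' v).1
    field_simp
end
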